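/- arXiv:1506.04697 — 4 statements merged into one kernel-verified Lean document; each statement's English description precedes it below -/
import Mathlib

section
/- Let R be a Dedekind domain (not a field) with fraction field K, and let M and M' be R-lattices (finitely generated torsion-free R-modules). If M ⊕ R and M' ⊕ R are isomorphic as R-modules, then M and M' are isomorphic as R-modules (the cancellation law for lattices over a Dedekind domain). -/
theorem aux_trace {R : Type*} [CommRing R] [IsDomain R] {N : Type*} [AddCommGroup N] [Module R N]
    [Module.Finite R N] [Module.Projective R N] [Module.IsTorsionFree R N] [Nontrivial N]
    (P : Ideal R) (hP : P ≠ ⊤) : ∃ (ψ : N →ₗ[R] R) (n : N), ψ n ∉ P := by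
  by_contra! hc
  obtain ⟨k, f, g, -, -, hfg⟩ := Module.Finite.exists_comp_eq_id_of_projective R N
  have hle : (⊤ : Submodule R N) ≤ P • ⊤ := by
    intro n _
    have h1 : n = f (g n) := (LinearMap.congr_fun hfg n).symm
    rw [h1, pi_eq_sum_univ (g n), map_sum]
    refine Submodule.sum_mem _ fun i _ => ?_
    rw [map_smul]
    exact Submodule.smul_mem_smul (hc (LinearMap.proj i ∘ₗ g) n) trivial
  obtain ⟨r, hr, h0⟩ := Submodule.exists_sub_one_mem_and_smul_eq_zero_of_fg_of_le_smul P ⊤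
    Module.Finite.fg_top hle
  obtain ⟨n, hn⟩ := exists_ne (0 : N)
  have hr0 : r = 0 := by
    have := h0 n trivial
    rw [smul_eq_zero] at this
    tauto
  apply hP
  rw [Ideal.eq_top_iff_one]
  have := P.neg_mem hr
  simpa [hr0] using this

theorem aux_coprime {R : Type*} [CommRing R] [IsDedekindDomain R] {N : Type*} [AddCommGroup N]
    [Module R N] [Module.Finite R N] [Module.Projective R N] [Module.IsTorsionFree R N]
    [Nontrivial N] (I : Ideal R) (hI : I ≠ ⊥) :
    ∃ ψ : N →ₗ[R] R, I ⊔ LinearMap.range ψ = ⊤ := by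
  classical
  let ι := {v : IsDedekindDomain.HeightOneSpectrum R // v.asIdeal ∣ I}
  have : Finite ι := (Ideal.finite_factors hI)
  have := Fintype.ofFinite ι
  have h1 : ∀ v : ι, ∃ (ψ : N →ₗ[R] R) (n : N), ψ n ∉ v.1.asIdeal := fun v =>
    aux_trace _ v.1.isPrime.ne_top
  choose ψ n hn using h1
  have hcop : Pairwise (Function.onFun IsCoprime (fun v : ι => v.1.asIdeal)) := by
    intro v w hvw
    have := v.1.isMaximal
    have := w.1.isMaximal
    refine Ideal.isCoprime_of_isMaximal fun h => hvw ?_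
    exact Subtype.ext (IsDedekindDomain.HeightOneSpectrum.ext h)
  have h2 : ∀ v : ι, ∃ r : R, ∀ w : ι, r - (if w = v then 1 else 0) ∈ w.1.asIdeal := fun v =>
    Ideal.exists_forall_sub_mem_ideal hcop _
  choose e he using h2
  refine ⟨∑ v, e v • ψ v, ?_⟩
  by_contra hne
  obtain ⟨P, hP, hle⟩ := Ideal.exists_le_maximal _ hne
  have hIP : I ≤ P := le_sup_left.trans hle
  let w : ι := ⟨⟨P, hP.isPrime, fun h => hI (le_bot_iff.1 (h ▸ hIP))⟩, Ideal.dvd_iff_le.2 hIP⟩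
  have hm : (∑ v, e v • ψ v) (n w) ∈ P := hle (Ideal.mem_sup_right ⟨n w, rfl⟩)
  have hd : ∑ v, (e v - (if w = v then 1 else 0)) * ψ v (n w) ∈ P :=
    Ideal.sum_mem _ fun v _ => Ideal.mul_mem_right _ _ (he v w)
  have := P.sub_mem hm hd
  apply hn w
  have hs : (∑ v, e v • ψ v) (n w) - ∑ v, (e v - (if w = v then 1 else 0)) * ψ v (n w)
      = ψ w (n w) := by
    rw [LinearMap.sum_apply, ← Finset.sum_sub_distrib, Finset.sum_eq_single w]
    · simp [sub_mul]
    · intro v _ hv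
      simp [sub_mul, hv.symm]
    · intro hw
      exact absurd (Finset.mem_univ _) hw
  rw [hs] at this
  exact this

theorem aux_ker_surj {R : Type*} [CommRing R] {M : Type*} [AddCommGroup M] [Module R M]
    (f : M × R →ₗ[R] R) (φ ψ : M →ₗ[R] R) (a : R) (hf : ∀ m r, f (m, r) = φ m + a * r)
    (m₀ : M) (h0 : φ m₀ + a * ψ m₀ = 1 - a) : Nonempty (M ≃ₗ[R] LinearMap.ker f) := by
  let g : M →ₗ[R] R := φ + a • ψ
  have hg : ∀ m, g m = φ m + a * ψ m := fun m => rfl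
  let p : M →ₗ[R] M := LinearMap.id - g.smulRight m₀
  have hp : ∀ m, p m = m - g m • m₀ := fun m => rfl
  refine ⟨LinearEquiv.ofLinearMap
    (LinearMap.codRestrict _ (p.prod (-g + ψ ∘ₗ p)) ?_)
    ((LinearMap.fst R M R - (LinearMap.snd R M R - ψ ∘ₗ LinearMap.fst R M R).smulRight m₀) ∘ₗ
      (LinearMap.ker f).subtype) ?_ ?_⟩
  · intro m
    change f (p m, -g m + ψ (p m)) = 0
    simp only [hf, hp, hg, map_sub, map_smul, smul_eq_mul]
    linear_combination (-(φ m + a * ψ m)) * h0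
  · ext ⟨⟨m, r⟩, hm⟩
    · rw [LinearMap.mem_ker, hf] at hm
      have : g (m - (r - ψ m) • m₀) = ψ m - r := by
        simp only [hg, map_sub, map_smul, smul_eq_mul]
        linear_combination hm - (r - ψ m) * h0
      simp [hp, this, -map_sub, -map_smul]
      module
    · rw [LinearMap.mem_ker, hf] at hm
      have : g (m - (r - ψ m) • m₀) = ψ m - r := by
        simp only [hg, map_sub, map_smul, smul_eq_mul]
        linear_combination hm - (r - ψ m) * h0
      have h3 : p (m - (r - ψ m) • m₀) = m := by
        rw [hp, this]; module
      simp [h3, this, -map_sub, -map_smul]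
  · ext m
    simp [hp]

theorem aux_ker_inj {R : Type*} [CommRing R] {M : Type*} [AddCommGroup M] [Module R M]
    (f : M × R →ₗ[R] R) (φ : M →ₗ[R] R) (a : R) (hf : ∀ m r, f (m, r) = φ m + a * r)
    (n : M) (s : R) (h1 : φ n + a * s = 1) (hφ : Function.Injective φ) :
    Nonempty (M ≃ₗ[R] LinearMap.ker f) := by
  refine ⟨LinearEquiv.ofBijective
    (LinearMap.codRestrict _ ((a • LinearMap.id).prod (-φ)) ?_) ⟨?_, ?_⟩⟩
  · intro m
    simp [hf]
  · intro x y hxy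
    have := congrArg (fun z => z.1.2) hxy
    exact hφ (by simpa using this)
  · rintro ⟨⟨m, r⟩, hm⟩
    rw [LinearMap.mem_ker, hf] at hm
    have hx : φ (s • m - r • n) = -r := by
      simp only [map_sub, map_smul, smul_eq_mul]
      linear_combination s * hm - r * h1
    refine ⟨s • m - r • n, Subtype.ext (Prod.ext ?_ ?_)⟩
    · apply hφ
      change φ (a • (s • m - r • n)) = φ m
      rw [map_smul, hx, smul_eq_mul]
      linear_combination -hm
    · change -φ (s • m - r • n) = r
      rw [hx, neg_neg]

theorem aux_ker {R : Type*} [CommRing R] [IsDedekindDomain R] {M : Type*} [AddCommGroup M]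
    [Module R M] [Module.Finite R M] [Module.IsTorsionFree R M]
    (f : M × R →ₗ[R] R) (hfs : Function.Surjective f) :
    Nonempty (M ≃ₗ[R] LinearMap.ker f) := by
  obtain ⟨φ, a, hf⟩ : ∃ (φ : M →ₗ[R] R) (a : R), ∀ m r, f (m, r) = φ m + a * r := by
    refine ⟨f ∘ₗ LinearMap.inl R M R, f (0, 1), fun m r => ?_⟩
    have : ((m, r) : M × R) = (m, 0) + r • (0, 1) := by simp
    rw [this, map_add, map_smul]
    simp [mul_comm]
  obtain ⟨⟨n, s⟩, h1⟩ := hfs 1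
  rw [hf] at h1
  by_cases hinj : Function.Injective φ
  · exact aux_ker_inj f φ a hf n s h1 hinj
  by_cases hφ : φ = 0
  · subst hφ
    simp only [LinearMap.zero_apply, zero_add] at h1 hf
    refine ⟨LinearEquiv.ofBijective
      (LinearMap.codRestrict _ (LinearMap.inl R M R) (by simp [hf])) ⟨?_, ?_⟩⟩
    · intro x y hxy
      exact congrArg (fun z : LinearMap.ker f => z.1.1) hxy
    · rintro ⟨⟨m, r⟩, hm⟩
      rw [LinearMap.mem_ker, hf] at hm
      refine ⟨m, Subtype.ext (Prod.ext rfl ?_)⟩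
      change 0 = r
      linear_combination r * h1 - s * hm
  · let I : Ideal R := LinearMap.range φ
    have hI : I ≠ ⊥ := fun h => hφ (LinearMap.range_eq_bot.1 h)
    have : Nontrivial (LinearMap.ker φ) :=
      Submodule.nontrivial_iff_ne_bot.2 fun h => hinj (LinearMap.ker_eq_bot.1 h)
    have : Module.Finite R (LinearMap.ker φ) := inferInstance
    have : Module.Projective R (LinearMap.ker φ) :=
      have := Module.finitePresentation_of_finite R (LinearMap.ker φ)
      Module.Flat.projective_of_finitePresentation
    have : Module.Projective R (LinearMap.range φ) :=
      have := Module.finitePresentation_of_finite R (LinearMap.range φ)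
      Module.Flat.projective_of_finitePresentation
    obtain ⟨ψ, hψ⟩ := aux_coprime (N := LinearMap.ker φ) I hI
    obtain ⟨t, ht⟩ := Module.projective_lifting_property φ.rangeRestrict LinearMap.id
      φ.surjective_rangeRestrict
    have ht' : ∀ x, φ (t x) = x := fun x => congrArg Subtype.val (LinearMap.congr_fun ht x)
    let q : M →ₗ[R] LinearMap.ker φ := LinearMap.codRestrict _
      (LinearMap.id - t ∘ₗ φ.rangeRestrict) (by intro m; simp [ht'])
    have hqt : ∀ x, q (t x) = 0 := by
      intro x
      apply Subtype.ext
      have : φ.rangeRestrict (t x) = x := LinearMap.congr_fun ht x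
      simp [q, this]
    have hqk : ∀ x : LinearMap.ker φ, q x = x := by
      intro x
      apply Subtype.ext
      have : φ.rangeRestrict x = 0 := Subtype.ext x.2
      simp [q, this]
    obtain ⟨j, ⟨m₁, rfl⟩, _, ⟨k, rfl⟩, hj⟩ := Submodule.mem_sup.1 ((Ideal.eq_top_iff_one _).1 hψ)
    let m' : M := (φ m₁ + ψ k) • n + (a * s) • m₁
    let b : M := t (φ.rangeRestrict m') + s • (k : M)
    have hb1 : φ b = φ m' := by
      have := k.2
      rw [LinearMap.mem_ker] at this
      simp [b, ht', this]
    have hb2 : ψ (q b) = s * ψ k := by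
      simp only [b, map_add, map_smul, hqt, hqk, zero_add, smul_eq_mul]
    have hb : φ b + a * ψ (q b) = 1 := by
      rw [hb1, hb2]
      simp only [m', map_add, map_smul, smul_eq_mul]
      linear_combination (φ m₁ + ψ k) * h1 + hj
    refine aux_ker_surj f φ (ψ ∘ₗ q) a hf ((1 - a) • b) ?_
    simp only [LinearMap.comp_apply, map_smul, smul_eq_mul]
    linear_combination (1 - a) * hb


/-- **Cancellation law for lattices over a Dedekind domain.**
Let `R` be a Dedekind domain (not a field) with fraction field `K`, and let `M`, `M'` be
`R`-lattices (finitely generated torsion-free `R`-modules).  If `M ⊕ R ≅ M' ⊕ R` as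
`R`-modules, then `M ≅ M'` as `R`-modules. -/
theorem cancellation_law_of_dedekind_lattices
    (R : Type*) [CommRing R] [IsDedekindDomain R] (hR : ¬ IsField R)
    (K : Type*) [Field K] [Algebra R K] [IsFractionRing R K]
    (M : Type*) [AddCommGroup M] [Module R M] [Module.Finite R M] [NoZeroSMulDivisors R M]
    (M' : Type*) [AddCommGroup M'] [Module R M'] [Module.Finite R M'] [NoZeroSMulDivisors R M']
    (h : Nonempty ((M × R) ≃ₗ[R] (M' × R))) :
    Nonempty (M ≃ₗ[R] M') := by
  obtain ⟨e⟩ := h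
  let f : M × R →ₗ[R] R := LinearMap.snd R M' R ∘ₗ e.toLinearMap
  have hf : Function.Surjective f := fun r => ⟨e.symm (0, r), by simp [f]⟩
  obtain ⟨e₁⟩ := aux_ker f hf
  let g : LinearMap.ker f →ₗ[R] M' :=
    LinearMap.fst R M' R ∘ₗ e.toLinearMap ∘ₗ (LinearMap.ker f).subtype
  have hg : Function.Bijective g := by
    constructor
    · rintro ⟨x, hx⟩ ⟨y, hy⟩ hxy
      apply Subtype.ext
      apply e.injective
      refine Prod.ext hxy ?_
      exact (LinearMap.mem_ker.1 hx).trans (LinearMap.mem_ker.1 hy).symm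
    · intro m
      exact ⟨⟨e.symm (m, 0), by simp [f]⟩, by simp [g]⟩
  exact ⟨e₁.trans (LinearEquiv.ofBijective g hg)⟩
end

section
/- Let R be a Dedekind domain (not a field). Every R-lattice M is projective as an R-module, and M is isomorphic to a direct sum J_1 ⊕ ⋯ ⊕ J_n of non-zero ideals J_i of R, where n is the R-rank of M. -/
open scoped TensorProduct

theorem proj_of_torsionFree_aux (R : Type*) [CommRing R] [IsDedekindDomain R]
    (M : Type*) [AddCommGroup M] [Module R M] [Module.Finite R M] [Module.IsTorsionFree R M] :
    Module.Projective R M := by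
  have : Module.FinitePresentation R M := Module.finitePresentation_of_finite R M
  exact Module.Flat.projective_of_finitePresentation

theorem split_aux {R M : Type*} [CommRing R] [AddCommGroup M] [Module R M] (f : M →ₗ[R] R)
    (s : LinearMap.range f →ₗ[R] M) (hs : f.rangeRestrict.comp s = LinearMap.id) :
    Nonempty (M ≃ₗ[R] (LinearMap.range f × LinearMap.ker f)) := by
  have h : ∀ y, f.rangeRestrict (s y) = y := fun y => LinearMap.congr_fun hs y
  have h' : ∀ y, f (s y) = y := fun y => congrArg Subtype.val (h y)
  refine ⟨(LinearEquiv.ofBijective (s.coprod (LinearMap.ker f).subtype) ⟨?_, ?_⟩).symm⟩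
  · rw [injective_iff_map_eq_zero]
    rintro ⟨a, b, hb⟩ hab
    simp only [LinearMap.coprod_apply, Submodule.subtype_apply] at hab
    have ha : a = 0 := by
      have := congrArg f hab
      rw [map_add, h', LinearMap.mem_ker.1 hb, add_zero, map_zero] at this
      exact Subtype.ext this
    subst ha
    simpa using hab
  · intro x
    refine ⟨(f.rangeRestrict x, ⟨x - s (f.rangeRestrict x), ?_⟩), ?_⟩
    · rw [LinearMap.mem_ker, map_sub, h']
      simp
    · simp

theorem steinitz_aux (R : Type*) [CommRing R] [IsDedekindDomain R] (n : ℕ) :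
    ∀ (M : Type _) [AddCommGroup M] [Module R M] [Module.Finite R M] [Module.IsTorsionFree R M],
      Module.finrank R M = n → ∃ J : Fin n → Ideal R, (∀ i, J i ≠ ⊥) ∧
        Nonempty (M ≃ₗ[R] ((i : Fin n) → ↥(J i))) := by
  induction n with
  | zero =>
    intro M _ _ _ _ h
    have : Subsingleton M := Module.finrank_zero_iff.1 h
    exact ⟨fun _ => ⊤, fun i => i.elim0, ⟨0, 0, fun x => Subsingleton.elim _ _,
      fun x => Subsingleton.elim _ _⟩⟩
  | succ n ih =>
    intro M _ _ _ _ h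
    have : Nontrivial M := Module.nontrivial_of_finrank_pos (R := R) (by omega)
    obtain ⟨v, hv⟩ := exists_ne (0 : M)
    have := proj_of_torsionFree_aux R M
    obtain ⟨f, hf⟩ := Module.Projective.exists_dual_ne_zero R hv
    have hne : LinearMap.range f ≠ ⊥ := by
      intro hb
      exact hf ((Submodule.mem_bot R).1 (hb ▸ LinearMap.mem_range_self f v))
    have := proj_of_torsionFree_aux R (LinearMap.range f)
    obtain ⟨s, hs⟩ := f.rangeRestrict.exists_rightInverse_of_surjective f.range_rangeRestrict
    obtain ⟨e⟩ := split_aux f s hs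
    have h1 : Module.finrank R (LinearMap.range f) = 1 := by
      have := Submodule.finrank_le (LinearMap.range f)
      rw [Module.finrank_self] at this
      have : Nontrivial (LinearMap.range f) := Submodule.nontrivial_iff_ne_bot.2 hne
      have := Module.finrank_pos (R := R) (M := LinearMap.range f)
      omega
    have h2 : Module.finrank R (LinearMap.ker f) = n := by
      have := (LinearMap.ker f).finrank_quotient_add_finrank
      rw [(LinearMap.quotKerEquivRange f).finrank_eq] at this
      omega
    obtain ⟨J, hJ, ⟨e'⟩⟩ := ih (LinearMap.ker f) h2
    let J' : Fin (n + 1) → Ideal R := Fin.cons (LinearMap.range f) J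
    refine ⟨J', ?_, ⟨?_⟩⟩
    · intro i
      refine Fin.cases hne hJ i
    · exact (e.trans (LinearEquiv.prodCongr (LinearEquiv.refl R _) e')).trans
        (Fin.consLinearEquiv R (fun i => ↥(J' i)))

/-- **Steinitz's theorem, existence part.**
Let `R` be a Dedekind domain (not a field) with fraction field `K`.  Every `R`-lattice `M`
(finitely generated torsion-free `R`-module) is projective as an `R`-module, and `M` is
isomorphic to a direct sum `J 0 ⊕ ⋯ ⊕ J (n-1)` of non-zero ideals of `R`, where `n` is the
`R`-rank of `M`, i.e. the dimension over `K` of `K ⊗[R] M`. -/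
theorem lattice_projective_and_direct_sum_of_ideals
    (R : Type*) [CommRing R] [IsDedekindDomain R] (hR : ¬ IsField R)
    (K : Type*) [Field K] [Algebra R K] [IsFractionRing R K]
    (M : Type*) [AddCommGroup M] [Module R M] [Module.Finite R M] [NoZeroSMulDivisors R M] :
    Module.Projective R M ∧
      ∃ (n : ℕ) (J : Fin n → Ideal R),
        (∀ i, J i ≠ ⊥) ∧
        Nonempty (M ≃ₗ[R] ((i : Fin n) → ↥(J i))) ∧
        n = Module.finrank K (K ⊗[R] M) := by
  have : Module.IsTorsionFree R M := by
    refine ⟨fun r hr x y hxy => ?_⟩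
    have h0 : r • (x - y) = 0 := by
      rw [smul_sub, sub_eq_zero]; exact hxy
    exact sub_eq_zero.1 ((smul_eq_zero.1 h0).resolve_left hr.ne_zero)
  refine ⟨proj_of_torsionFree_aux R M, Module.finrank R M, ?_⟩
  obtain ⟨J, hJ, e⟩ := steinitz_aux R _ M rfl
  refine ⟨J, hJ, e, ?_⟩
  have : IsLocalizedModule (nonZeroDivisors R) (TensorProduct.mk R K M 1) :=
    (isLocalizedModule_iff_isBaseChange (nonZeroDivisors R) K _).2
      (TensorProduct.isBaseChange R M K)
  rw [IsFractionRing.finrank_right_eq R K (K ⊗[R] M)]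
  exact (IsLocalizedModule.finrank_eq (nonZeroDivisors R) (TensorProduct.mk R K M 1) le_rfl).symm
end

section
/- Let R be a Dedekind domain (not a field). Two R-lattices M = J_1 ⊕ ⋯ ⊕ J_n and M' = J'_1 ⊕ ⋯ ⊕ J'_m, with all J_i and J'_j non-zero ideals of R, are isomorphic as R-modules if and only if n = m and the product ideals J_1⋯J_n and J'_1⋯J'_n are isomorphic as R-modules. -/
namespace SteinitzAux

open scoped Pointwise

/-- Two submodule-style ideals related by mutually inverse scalars in `K` are isomorphic. -/
lemma equiv_of_scalars {R : Type*} [CommRing R] {K : Type*} [Field K] [Algebra R K]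
    (hinj : Function.Injective (algebraMap R K)) (P P' : Ideal R) (d e : K) (hde : d * e = 1)
    (h : ∀ x ∈ P, ∃ y ∈ P', algebraMap R K y = d * algebraMap R K x)
    (h' : ∀ x ∈ P', ∃ y ∈ P, algebraMap R K y = e * algebraMap R K x) :
    Nonempty (P ≃ₗ[R] P') := by
  choose f hf hf2 using h
  choose g hg hg2 using h'
  refine ⟨{ toFun := fun x => ⟨f x.1 x.2, hf _ _⟩
            invFun := fun x => ⟨g x.1 x.2, hg _ _⟩
            map_add' := ?_, map_smul' := ?_, left_inv := ?_, right_inv := ?_ }⟩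
  · intro x y
    apply Subtype.ext
    apply hinj
    simp only [Submodule.coe_add, map_add, hf2]
    ring
  · intro r x
    apply Subtype.ext
    apply hinj
    simp only [Submodule.coe_smul, smul_eq_mul, map_mul, hf2, RingHom.id_apply]
    ring
  · intro x
    apply Subtype.ext
    apply hinj
    simp only [hf2, hg2]
    linear_combination (algebraMap R K x) * hde
  · intro x
    apply Subtype.ext
    apply hinj
    simp only [hf2, hg2]
    linear_combination (algebraMap R K x) * hde

/-- Every linear map between direct sums of ideals is given by a matrix over `K`. -/
lemma exists_matrix {R : Type*} [CommRing R] {K : Type*} [Field K] [Algebra R K]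
    (hinj : Function.Injective (algebraMap R K))
    {n m : ℕ} (J : Fin n → Ideal R) (J' : Fin m → Ideal R) (hJ : ∀ i, J i ≠ ⊥)
    (φ : ((i : Fin n) → ↥(J i)) →ₗ[R] ((i : Fin m) → ↥(J' i))) :
    ∃ A : Matrix (Fin m) (Fin n) K, ∀ x j,
      algebraMap R K (φ x j) = ∑ i, A j i * algebraMap R K (x i) := by
  choose a ha ha0 using fun i => Submodule.exists_mem_ne_zero_of_ne_bot (hJ i)
  have hK : ∀ i, algebraMap R K (a i) ≠ 0 := fun i h => ha0 i (hinj (by simpa using h))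
  refine ⟨fun j i => algebraMap R K (φ (Pi.single i ⟨a i, ha i⟩) j) / algebraMap R K (a i), ?_⟩
  intro x j
  have hx : x = ∑ i, Pi.single i (x i) := (Finset.univ_sum_single x).symm
  conv_lhs => rw [hx]
  rw [map_sum, Finset.sum_apply, AddSubmonoidClass.coe_finsetSum, map_sum]
  refine Finset.sum_congr rfl fun i _ => ?_
  have key : a i • (Pi.single i (x i) : (i : Fin n) → ↥(J i))
      = (x i : R) • Pi.single i ⟨a i, ha i⟩ := by
    rw [← Pi.single_smul, ← Pi.single_smul]
    congr 1
    apply Subtype.ext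
    simp [mul_comm]
  have key2 := congrArg (fun z => algebraMap R K (φ z j)) key
  simp only [map_smul, Pi.smul_apply, Submodule.coe_smul, smul_eq_mul, map_mul] at key2
  rw [div_mul_eq_mul_div, eq_div_iff (hK i)]
  linear_combination key2

lemma matrix_mul_eq_one {R : Type*} [CommRing R] {K : Type*} [Field K] [Algebra R K]
    (hinj : Function.Injective (algebraMap R K))
    {n m : ℕ} (J : Fin n → Ideal R) (J' : Fin m → Ideal R) (hJ : ∀ i, J i ≠ ⊥)
    (φ : ((i : Fin n) → ↥(J i)) →ₗ[R] ((i : Fin m) → ↥(J' i)))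
    (ψ : ((i : Fin m) → ↥(J' i)) →ₗ[R] ((i : Fin n) → ↥(J i)))
    (A : Matrix (Fin m) (Fin n) K) (B : Matrix (Fin n) (Fin m) K)
    (hA : ∀ x j, algebraMap R K (φ x j) = ∑ i, A j i * algebraMap R K (x i))
    (hB : ∀ x j, algebraMap R K (ψ x j) = ∑ i, B j i * algebraMap R K (x i))
    (h : ∀ x, ψ (φ x) = x) : B * A = 1 := by
  choose a ha ha0 using fun i => Submodule.exists_mem_ne_zero_of_ne_bot (hJ i)
  have hK : ∀ i, algebraMap R K (a i) ≠ 0 := fun i h => ha0 i (hinj (by simpa using h))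
  ext j k
  have h1 := hB (φ (Pi.single k ⟨a k, ha k⟩)) j
  rw [h] at h1
  simp only [hA] at h1
  have h2 : ∀ i, algebraMap R K
      ((Pi.single k ⟨a k, ha k⟩ : (i : Fin n) → ↥(J i)) i) = if i = k then algebraMap R K (a k) else 0 := by
    intro i
    by_cases hik : i = k
    · subst hik; simp
    · simp [hik]
  simp only [h2, mul_ite, mul_zero, Finset.sum_ite_eq', Finset.mem_univ, if_true] at h1
  apply mul_right_cancel₀ (hK k)
  rw [Matrix.mul_apply, Finset.sum_mul, Matrix.one_apply, ite_mul, one_mul, zero_mul, h1]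
  exact Finset.sum_congr rfl fun i _ => by ring

lemma det_maps {R : Type*} [CommRing R] {K : Type*} [Field K] [Algebra R K]
    {n : ℕ} (J : Fin n → Ideal R) (J' : Fin n → Ideal R)
    (φ : ((i : Fin n) → ↥(J i)) →ₗ[R] ((i : Fin n) → ↥(J' i)))
    (A : Matrix (Fin n) (Fin n) K)
    (hA : ∀ x j, algebraMap R K (φ x j) = ∑ i, A j i * algebraMap R K (x i)) :
    ∀ x ∈ ∏ i, J i, ∃ y ∈ ∏ i, J' i, algebraMap R K y = A.det * algebraMap R K x := by
  intro x hx
  have hsp : ∏ i, J i = Ideal.span (∏ i, (J i : Set R)) := by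
    rw [← Ideal.prod_span]
    simp
  rw [hsp] at hx
  induction hx using Submodule.span_induction with
  | mem x hx =>
    rw [Set.mem_fintype_prod] at hx
    obtain ⟨g, hg, rfl⟩ := hx
    refine ⟨Matrix.det (Matrix.of fun j i => ((φ (Pi.single i ⟨g i, hg i⟩) j : J' j) : R)), ?_, ?_⟩
    · rw [← Matrix.det_transpose, Matrix.det_apply']
      refine Ideal.sum_mem _ fun σ _ => Ideal.mul_mem_left _ _ ?_
      exact Ideal.prod_mem_prod fun i _ => Submodule.coe_mem _
    · rw [RingHom.map_det, map_prod, mul_comm, ← Matrix.det_mul_row]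
      congr 1
      ext j i
      simp only [RingHom.mapMatrix_apply, Matrix.map_apply, Matrix.of_apply, hA]
      rw [Finset.sum_eq_single i]
      · simp [mul_comm]
      · intro b _ hb
        simp [hb]
      · simp
  | zero => exact ⟨0, zero_mem _, by simp⟩
  | add x y _ _ hx hy =>
    obtain ⟨a, ha, ha'⟩ := hx
    obtain ⟨b, hb, hb'⟩ := hy
    exact ⟨a + b, add_mem ha hb, by rw [map_add, map_add, ha', hb']; ring⟩
  | smul r x _ hx =>
    obtain ⟨a, ha, ha'⟩ := hx
    exact ⟨r * a, Ideal.mul_mem_left _ _ ha, by rw [smul_eq_mul, map_mul, map_mul, ha']; ring⟩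

lemma forward {R : Type*} [CommRing R] [IsDomain R]
    {n m : ℕ} (J : Fin n → Ideal R) (J' : Fin m → Ideal R)
    (hJ : ∀ i, J i ≠ ⊥) (hJ' : ∀ i, J' i ≠ ⊥)
    (φ : ((i : Fin n) → ↥(J i)) ≃ₗ[R] ((i : Fin m) → ↥(J' i))) :
    n = m ∧ Nonempty (↥(∏ i, J i) ≃ₗ[R] ↥(∏ i, J' i)) := by
  have hinj := IsFractionRing.injective R (FractionRing R)
  obtain ⟨A, hA⟩ := exists_matrix hinj J J' hJ φ.toLinearMap
  obtain ⟨B, hB⟩ := exists_matrix hinj J' J hJ' φ.symm.toLinearMap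
  have hBA := matrix_mul_eq_one hinj J J' hJ _ _ A B hA hB (by simp)
  have hAB := matrix_mul_eq_one hinj J' J hJ' _ _ B A hB hA (by simp)
  have hnm : n = m := by
    simpa using Matrix.square_of_invertible B A hBA hAB
  subst hnm
  refine ⟨rfl, ?_⟩
  refine equiv_of_scalars hinj _ _ A.det B.det ?_ (det_maps J J' _ A hA) (det_maps J' J _ B hB)
  rw [← Matrix.det_mul, hAB, Matrix.det_one]

lemma equiv_of_span_mul {R : Type*} [CommRing R] [IsDomain R] (I I' : Ideal R) (a c : R)
    (ha : a ≠ 0) (hc : c ≠ 0) (h : Ideal.span {a} * I = Ideal.span {c} * I') :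
    Nonempty (I ≃ₗ[R] I') := by
  have hinj := IsFractionRing.injective R (FractionRing R)
  have ha' : algebraMap R (FractionRing R) a ≠ 0 := fun h => ha (hinj (by simpa using h))
  have hc' : algebraMap R (FractionRing R) c ≠ 0 := fun h => hc (hinj (by simpa using h))
  refine equiv_of_scalars hinj I I' (algebraMap R _ a / algebraMap R _ c)
    (algebraMap R _ c / algebraMap R _ a) (by field_simp) ?_ ?_
  · intro x hx
    have : a * x ∈ Ideal.span {c} * I' := h ▸
      Ideal.mul_mem_mul (Ideal.mem_span_singleton_self a) hx
    obtain ⟨y, hy, e⟩ := Ideal.mem_span_singleton_mul.1 this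
    refine ⟨y, hy, ?_⟩
    have e' := congrArg (algebraMap R (FractionRing R)) e
    rw [map_mul, map_mul] at e'
    rw [div_mul_eq_mul_div, eq_div_iff hc']
    linear_combination e'
  · intro x hx
    have : c * x ∈ Ideal.span {a} * I := h ▸
      Ideal.mul_mem_mul (Ideal.mem_span_singleton_self c) hx
    obtain ⟨y, hy, e⟩ := Ideal.mem_span_singleton_mul.1 this
    refine ⟨y, hy, ?_⟩
    have e' := congrArg (algebraMap R (FractionRing R)) e
    rw [map_mul, map_mul] at e'
    rw [div_mul_eq_mul_div, eq_div_iff ha']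
    linear_combination e'

lemma coprime_equiv {R : Type*} [CommRing R] (I J : Ideal R) (h : I ⊔ J = ⊤) :
    Nonempty ((I × J) ≃ₗ[R] (R × ↥(I * J))) := by
  obtain ⟨x, hx, y, hy, hxy⟩ := Submodule.mem_sup.1 (h ▸ Submodule.mem_top : (1 : R) ∈ I ⊔ J)
  refine ⟨{
    toFun := fun p => (p.1.1 + p.2.1, ⟨p.1.1 * y - x * p.2.1,
      sub_mem (Ideal.mul_mem_mul p.1.2 hy) (Ideal.mul_mem_mul hx p.2.2)⟩)
    invFun := fun q => (⟨q.1 * x + q.2.1, add_mem (I.mul_mem_left _ hx) (Ideal.mul_le_left q.2.2)⟩,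
      ⟨q.1 * y - q.2.1, sub_mem (J.mul_mem_left _ hy) (Ideal.mul_le_right q.2.2)⟩)
    map_add' := ?_, map_smul' := ?_, left_inv := ?_, right_inv := ?_ }⟩
  · rintro ⟨⟨u, hu⟩, ⟨v, hv⟩⟩ ⟨⟨u', hu'⟩, ⟨v', hv'⟩⟩
    refine Prod.ext ?_ (Subtype.ext ?_)
    · simp; ring
    · simp; ring
  · rintro r ⟨⟨u, hu⟩, ⟨v, hv⟩⟩
    refine Prod.ext ?_ (Subtype.ext ?_)
    · simp; ring
    · simp; ring
  · rintro ⟨⟨u, hu⟩, ⟨v, hv⟩⟩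
    refine Prod.ext (Subtype.ext ?_) (Subtype.ext ?_)
    · simp only; linear_combination u * hxy
    · simp only; linear_combination v * hxy
  · rintro ⟨r, ⟨w, hw⟩⟩
    refine Prod.ext ?_ (Subtype.ext ?_)
    · simp only; linear_combination r * hxy
    · simp only; linear_combination w * hxy

lemma steinitz_two {R : Type*} [CommRing R] [IsDedekindDomain R] (I J : Ideal R)
    (hI : I ≠ ⊥) (hJ : J ≠ ⊥) : Nonempty ((I × J) ≃ₗ[R] (R × ↥(I * J))) := by
  by_cases hJt : J = ⊤
  · exact coprime_equiv I J (by simp [hJt])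
  obtain ⟨a, ha, ha0⟩ := Submodule.exists_mem_ne_zero_of_ne_bot hI
  obtain ⟨C, hC⟩ := Ideal.dvd_iff_le.2 ((Ideal.span_singleton_le_iff_mem I).2 ha)
  have hsa : Ideal.span {a} ≠ (0 : Ideal R) := by simpa using ha0
  have hC0 : C ≠ 0 := by
    rintro rfl
    exact hsa (by simpa using hC)
  obtain ⟨c, hc⟩ := IsDedekindDomain.exists_sup_span_eq (I := C * J) (J := C) Ideal.mul_le_left
    (mul_ne_zero hC0 hJ)
  have hc0 : c ≠ 0 := by
    rintro rfl
    apply hJt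
    have : C * J = C * ⊤ := by simpa using hc
    exact mul_left_cancel₀ hC0 this
  have hcC : c ∈ C := by
    rw [← hc]; exact Ideal.mem_sup_right (Ideal.mem_span_singleton_self c)
  obtain ⟨I', hI'⟩ := Ideal.dvd_iff_le.2 ((Ideal.span_singleton_le_iff_mem C).2 hcC)
  have hrel : Ideal.span {c} * I = Ideal.span {a} * I' := by
    rw [hI', hC]; ring
  have hcop : I' ⊔ J = ⊤ := by
    apply mul_left_cancel₀ hC0
    rw [Ideal.mul_sup, ← hI', sup_comm, hc, Ideal.mul_top]
  obtain ⟨e1⟩ := equiv_of_span_mul I I' c a hc0 ha0 hrel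
  obtain ⟨e2⟩ := equiv_of_span_mul (I * J) (I' * J) c a hc0 ha0 (by
    rw [← mul_assoc, ← mul_assoc, hrel])
  obtain ⟨e3⟩ := coprime_equiv I' J hcop
  exact ⟨(e1.prodCongr (LinearEquiv.refl R J)).trans
    (e3.trans ((LinearEquiv.refl R R).prodCongr e2.symm))⟩

/-- Splitting off the first coordinate. -/
def consEquiv (R : Type*) [CommRing R] {n : ℕ} (M : Fin (n + 1) → Type*)
    [∀ i, AddCommGroup (M i)] [∀ i, Module R (M i)] :
    ((i : Fin (n + 1)) → M i) ≃ₗ[R] (M 0 × ((i : Fin n) → M i.succ)) where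
  toFun x := (x 0, fun i => x i.succ)
  invFun p := Fin.cons p.1 p.2
  map_add' _ _ := rfl
  map_smul' _ _ := rfl
  left_inv x := Fin.cons_self_tail x
  right_inv p := by simp

lemma steinitz {R : Type*} [CommRing R] [IsDedekindDomain R] (n : ℕ) :
    ∀ (J : Fin (n + 1) → Ideal R), (∀ i, J i ≠ ⊥) →
    Nonempty (((i : Fin (n + 1)) → ↥(J i)) ≃ₗ[R] ((Fin n → R) × ↥(∏ i, J i))) := by
  induction n with
  | zero =>
    intro J _
    have e0 : J 0 = ∏ i, J i := by simp
    exact ⟨(consEquiv R fun i => ↥(J i)).trans ((LinearEquiv.prodComm R _ _).trans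
      ((LinearEquiv.ofSubsingleton _ _).prodCongr (LinearEquiv.ofEq _ _ e0)))⟩
  | succ n ih =>
    intro J hJ
    obtain ⟨e⟩ := ih (fun i => J i.succ) (fun i => hJ _)
    have hP : ∏ i : Fin (n + 1), J i.succ ≠ ⊥ := by
      rw [← Ideal.zero_eq_bot, Finset.prod_ne_zero_iff]
      exact fun i _ => hJ _
    obtain ⟨e2⟩ := steinitz_two (J 0) _ (hJ 0) hP
    have e0 : J 0 * ∏ i : Fin (n + 1), J i.succ = ∏ i, J i := (Fin.prod_univ_succ J).symm
    have e3 : ((R × ↥(J 0 * ∏ i : Fin (n + 1), J i.succ)) × (Fin n → R)) ≃ₗ[R]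
        ((R × (Fin n → R)) × ↥(J 0 * ∏ i : Fin (n + 1), J i.succ)) :=
      (LinearEquiv.prodAssoc R _ _ _).trans
        (((LinearEquiv.refl R R).prodCongr (LinearEquiv.prodComm R _ _)).trans
          (LinearEquiv.prodAssoc R _ _ _).symm)
    have e4 := e3.trans
      ((consEquiv R fun _ : Fin (n + 1) => R).symm.prodCongr (LinearEquiv.ofEq _ _ e0))
    have e5 := (e2.prodCongr (LinearEquiv.refl R (Fin n → R))).trans e4
    have e6 := (LinearEquiv.prodAssoc R _ _ _).symm.trans e5
    have e7 := ((LinearEquiv.refl R (J 0)).prodCongr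
      (e.trans (LinearEquiv.prodComm R _ _))).trans e6
    exact ⟨(consEquiv R fun i => ↥(J i)).trans e7⟩

end SteinitzAux


/-- **Steinitz's theorem, uniqueness part.**
Let `R` be a Dedekind domain (not a field).  Two `R`-lattices `M = J 0 ⊕ ⋯ ⊕ J (n-1)` and
`M' = J' 0 ⊕ ⋯ ⊕ J' (m-1)`, where all `J i` and `J' i` are non-zero ideals of `R`, are
isomorphic as `R`-modules if and only if `n = m` and the product ideals `J 0 ⋯ J (n-1)` and
`J' 0 ⋯ J' (m-1)` are isomorphic as `R`-modules. -/
theorem direct_sums_of_ideals_isomorphic_iff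
    (R : Type*) [CommRing R] [IsDedekindDomain R] (hR : ¬ IsField R)
    (n m : ℕ) (J : Fin n → Ideal R) (J' : Fin m → Ideal R)
    (hJ : ∀ i, J i ≠ ⊥) (hJ' : ∀ i, J' i ≠ ⊥) :
    Nonempty (((i : Fin n) → ↥(J i)) ≃ₗ[R] ((i : Fin m) → ↥(J' i))) ↔
      n = m ∧ Nonempty (↥(∏ i, J i) ≃ₗ[R] ↥(∏ i, J' i)) := by

  constructor
  · rintro ⟨φ⟩
    exact SteinitzAux.forward J J' hJ hJ' φ
  · rintro ⟨rfl, ⟨e⟩⟩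
    cases n with
    | zero => exact ⟨LinearEquiv.ofSubsingleton _ _⟩
    | succ n =>
      obtain ⟨e1⟩ := SteinitzAux.steinitz n J hJ
      obtain ⟨e2⟩ := SteinitzAux.steinitz n J' hJ'
      exact ⟨e1.trans (((LinearEquiv.refl R _).prodCongr e).trans e2.symm)⟩
end

section
/- Let K be a global field, R the ring of S-integers of K for a finite set S of places containing all archimedean ones, A a finite-dimensional separable K-algebra, and Λ an R-order in A. Then the set LF_1(Λ) of isomorphism classes of locally free right Λ-ideals in A is finite. -/
open scoped TensorProduct
open IsDedekindDomain

noncomputable section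

/-- A field `K` is a *global field* if it is a number field (finite extension of `ℚ`) or a
global function field (finite separable extension of `𝔽_p(t)` for some prime `p` and some
element `t` transcendental over the prime field `𝔽_p`; `𝔽_p(t)` is realised as the subfield
`Subfield.closure {t}` generated by `t`, and transcendence of `t` as infiniteness of this
subfield). -/
def IsGlobalField (K : Type*) [Field K] : Prop :=
  NumberField K ∨
    ∃ (p : ℕ) (t : K), p.Prime ∧ CharP K p ∧
      Infinite ↥(Subfield.closure ({t} : Set K)) ∧
      Module.Finite ↥(Subfield.closure ({t} : Set K)) K ∧
      Algebra.IsSeparable ↥(Subfield.closure ({t} : Set K)) K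


/-- A `K`-algebra is *separable* if it remains semisimple after base change to an algebraic
closure of `K` (equivalently, it is semisimple with centre a product of finite separable
field extensions of `K`). -/
def IsSeparableAlgebra (K : Type*) [Field K] (A : Type*) [Ring A] [Algebra K A] : Prop :=
  IsSemisimpleRing ((AlgebraicClosure K) ⊗[K] A)

variable (R : Type*) [CommRing R] [IsDedekindDomain R]
variable (K : Type*) [Field K] [Algebra R K] [IsFractionRing R K]
variable (A : Type*) [Ring A] [Algebra K A] [FiniteDimensional K A]
variable [Algebra R A] [IsScalarTower R K A]

/-- An `R`-order in the `K`-algebra `A`: an `R`-subring of `A` which is finitely generated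
as an `R`-module and spans `A` over `K`. -/
def IsROrder (Λ : Subalgebra R A) : Prop :=
  Module.Finite R ↥Λ ∧ Submodule.span K (Λ : Set A) = ⊤

/-- The completion `A_v = K_v ⊗[K] A` of `A` at a finite place (height-one prime) `v` of `R`. -/
def PlaceAlgebra (v : HeightOneSpectrum R) : Type _ := v.adicCompletion K ⊗[K] A

instance (v : HeightOneSpectrum R) : Ring (PlaceAlgebra R K A v) :=
  inferInstanceAs (Ring (v.adicCompletion K ⊗[K] A))

/-- The canonical identification of `K_v ⊗[K] A` with the completed algebra `A_v`. -/
def PlaceAlgebra.of (v : HeightOneSpectrum R) (z : v.adicCompletion K ⊗[K] A) :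
    PlaceAlgebra R K A v := z

/-- The completed order `Λ_v = R_v ⊗[R] Λ`, realised as the subring of `A_v` generated by
the valuation integers `O_v` of `K_v` and by (the image of) `Λ`; this is exactly the
`O_v`-span of the image of `Λ`. -/
def orderAt (Λ : Subalgebra R A) (v : HeightOneSpectrum R) : Subring (PlaceAlgebra R K A v) :=
  Subring.closure
    ((fun c : v.adicCompletion K => PlaceAlgebra.of R K A v (c ⊗ₜ[K] (1 : A))) ''
        (v.adicCompletionIntegers K : Set (v.adicCompletion K)) ∪
      (fun a : A => PlaceAlgebra.of R K A v ((1 : v.adicCompletion K) ⊗ₜ[K] a)) '' (Λ : Set A))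

/-- The completed lattice `J_v = R_v ⊗[R] J ⊆ A_v`, the `O_v`-span of the image of `J`. -/
def latticeAt (J : Submodule R A) (v : HeightOneSpectrum R) :
    AddSubgroup (PlaceAlgebra R K A v) :=
  AddSubgroup.closure
    {z | ∃ c ∈ (v.adicCompletionIntegers K : Set (v.adicCompletion K)),
      ∃ x ∈ J, z = PlaceAlgebra.of R K A v (c ⊗ₜ[K] x)}

/-- A *locally free (right) `Λ`-ideal* in `A`: a full `R`-lattice `J` in `A` (a finitely
generated `R`-submodule spanning `A` over `K`) which is a right `Λ`-module and whose
completion at every finite place `v` is a free `Λ_v`-module of rank one, i.e.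
`J_v = u ⬝ Λ_v` for some unit `u` of `A_v`. -/
structure LocallyFreeIdeal (Λ : Subalgebra R A) where
  carrier : Submodule R A
  fg : carrier.FG
  spans : Submodule.span K (carrier : Set A) = ⊤
  right_mul : ∀ x ∈ carrier, ∀ a ∈ Λ, x * a ∈ carrier
  locallyFree : ∀ v : HeightOneSpectrum R, ∃ u : (PlaceAlgebra R K A v)ˣ,
      (latticeAt R K A carrier v : Set (PlaceAlgebra R K A v)) =
        (fun y : PlaceAlgebra R K A v => u.val * y) ''
          (orderAt R K A Λ v : Set (PlaceAlgebra R K A v))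

variable {R K A}

/-- A right `Λ`-module isomorphism between additive subgroups of `Fin m → A` which are stable
under the diagonal right multiplication by elements of `Λ`: an additive equivalence commuting
with right multiplication by every element of `Λ`. -/
def RightLamIso (Λ : Subalgebra R A) {m : ℕ} (P Q : AddSubgroup (Fin m → A)) : Prop :=
  ∃ e : P ≃+ Q, ∀ (z : P) (a : A), a ∈ Λ →
    ∀ h : (fun i => z.val i * a) ∈ P,
      (e ⟨fun i => z.val i * a, h⟩).val = fun i => (e z).val i * a

/-- The external direct sum `M 0 ⊕ ⋯ ⊕ M (m-1)` of `R`-submodules of `A`, realised as an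
additive subgroup of `Fin m → A`. -/
def sumLat {m : ℕ} (Ms : Fin m → Submodule R A) : AddSubgroup (Fin m → A) :=
  AddSubgroup.pi Set.univ fun i => (Ms i).toAddSubgroup

/-- Isomorphism of locally free right `Λ`-ideals as right `Λ`-modules. -/
def IdealIso (Λ : Subalgebra R A) (I I' : LocallyFreeIdeal R K A Λ) : Prop :=
  RightLamIso Λ (sumLat ![I.carrier]) (sumLat ![I'.carrier])

/-- The lattice `J ⊕ Λ^r`, as an additive subgroup of `Fin (r+1) → A`. -/
def stdLat (Λ : Subalgebra R A) (J : Submodule R A) (r : ℕ) :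
    AddSubgroup (Fin (r + 1) → A) :=
  sumLat (Fin.cons J fun _ => Subalgebra.toSubmodule Λ)

/-- Two locally free right `Λ`-ideals `J`, `J'` are *stably isomorphic* if
`J ⊕ Λ^r ≅ J' ⊕ Λ^r` as right `Λ`-modules for some `r ≥ 0`. -/
def StablyIsomorphic (Λ : Subalgebra R A) (I I' : LocallyFreeIdeal R K A Λ) : Prop :=
  ∃ r : ℕ, RightLamIso Λ (stdLat Λ I.carrier r) (stdLat Λ I'.carrier r)

end


section

open Module


theorem jz_norm_bound {E O : Type*} [EuclideanDomain E] [Ring O] [Algebra E O]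
    (abv : AbsoluteValue E ℤ) {ι : Type*} [DecidableEq ι] [Fintype ι] (bS : Basis ι E O) :
    ∃ C : ℤ, 0 ≤ C ∧ ∀ (a : O) (y : ℤ), (∀ k, abv (bS.repr a k) ≤ y) →
      abv (Algebra.norm E a) ≤ C * y ^ Fintype.card ι := by
  classical
  obtain ⟨m, hm, hle⟩ : ∃ m : ℤ, 0 ≤ m ∧
      ∀ i j k, abv (Algebra.leftMulMatrix bS (bS i) j k) ≤ m := by
    let f : ι × ι × ι → ℤ := fun x => abv (Algebra.leftMulMatrix bS (bS x.1) x.2.1 x.2.2)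
    have hf : ∀ x, 0 ≤ f x := fun x => abv.nonneg _
    refine ⟨∑ x, f x, Finset.sum_nonneg fun _ _ => hf _, fun i j k => ?_⟩
    have := Finset.single_le_sum (fun x _ => hf x) (Finset.mem_univ (i, j, k))
    exact this
  refine ⟨Nat.factorial (Fintype.card ι) • (Fintype.card ι • m) ^ Fintype.card ι, by positivity, ?_⟩
  intro a y hy
  conv_lhs => rw [← bS.sum_repr a]
  rw [Algebra.norm_apply, ← LinearMap.det_toMatrix bS]
  simp only [map_sum, map_smul, map_sum, map_smul, smul_mul_assoc, ← mul_pow]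
  convert! Matrix.det_sum_smul_le (abv := abv) (x := m) Finset.univ _ hy using 3
  · rw [Finset.card_univ, smul_mul_assoc, mul_comm]
  · intro i j k
    exact hle i j k

theorem jz_approx {E O : Type*} [EuclideanDomain E] [Infinite E] [Ring O] [Nontrivial O]
    [Algebra E O]
    {abv : AbsoluteValue E ℤ} (adm : abv.IsAdmissible)
    {ι : Type*} [DecidableEq ι] [Fintype ι] (bS : Basis ι E O) :
    ∃ T : Finset E, (0 : E) ∉ T ∧ ∀ (a : O) (b : E), b ≠ 0 → ∃ q : O, ∃ r ∈ T,
      abv (Algebra.norm E (r • a - b • q)) < abv (Algebra.norm E (algebraMap E O b)) := by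
  classical
  obtain ⟨C, hC, hbound⟩ := jz_norm_bound abv bS
  have hne : Nonempty ι := bS.index_nonempty
  have dim_pos : Fintype.card ι ≠ 0 := Fintype.card_ne_zero
  set ε : ℝ := 1 / (C + 1) with ε_eq
  have hC' : (0 : ℝ) ≤ C := by exact_mod_cast hC
  have hε : 0 < ε := by positivity
  have hε1 : ε ≤ 1 := by
    rw [ε_eq, div_le_one (by positivity)]; linarith
  let μ : Fin (adm.card ε ^ Fintype.card ι).succ ↪ E :=
    Fin.valEmbedding.trans (Infinite.natEmbedding E)
  refine ⟨(Finset.univ.image fun xy : _ × _ => μ xy.1 - μ xy.2).erase 0,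
    Finset.notMem_erase _ _, ?_⟩
  intro a b hb
  obtain ⟨j, k, j_ne_k, hjk⟩ := adm.exists_approx hε hb fun j i => μ j * bS.repr a i
  refine ⟨∑ i, (μ k * bS.repr a i / b - μ j * bS.repr a i / b) • bS i, μ k - μ j, ?_, ?_⟩
  · simp only [Finset.mem_erase, Finset.mem_image]
    exact ⟨sub_ne_zero.mpr fun h => j_ne_k (μ.injective h).symm, ⟨k, j⟩, Finset.mem_univ _, rfl⟩
  rw [Algebra.norm_algebraMap_of_basis bS, abv.map_pow]
  have key := hbound ((μ k - μ j) • a -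
    b • ∑ i, (μ k * bS.repr a i / b - μ j * bS.repr a i / b) • bS i) ⌊(abv b : ℝ) * ε⌋ (by
      intro i
      have h1 : bS.repr ((μ k - μ j) • a -
        b • ∑ i, (μ k * bS.repr a i / b - μ j * bS.repr a i / b) • bS i) i
          = μ k * bS.repr a i % b - μ j * bS.repr a i % b := by
        rw [map_sub, map_smul, map_smul, Finsupp.sub_apply, Finsupp.smul_apply, Finsupp.smul_apply,
          Basis.repr_sum_self, EuclideanDomain.mod_eq_sub_mul_div, EuclideanDomain.mod_eq_sub_mul_div]
        simp only [smul_eq_mul]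
        ring
      rw [h1, Int.le_floor]
      have := (hjk i).le
      simpa using this)
  have h2 : ((⌊(abv b : ℝ) * ε⌋ : ℤ) : ℝ) ≤ abv b * ε := Int.floor_le _
  have hb0 : (0 : ℝ) < abv b := by exact_mod_cast abv.pos hb
  have h3 : (0 : ℝ) ≤ ((⌊(abv b : ℝ) * ε⌋ : ℤ) : ℝ) := by
    exact_mod_cast Int.floor_nonneg.mpr (by positivity)
  refine lt_of_le_of_lt key ?_
  have : (C : ℝ) * ((⌊(abv b : ℝ) * ε⌋ : ℤ) : ℝ) ^ Fintype.card ι < (abv b : ℝ) ^ Fintype.card ι := by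
    calc (C : ℝ) * ((⌊(abv b : ℝ) * ε⌋ : ℤ) : ℝ) ^ Fintype.card ι
        ≤ C * (abv b * ε) ^ Fintype.card ι := by gcongr
      _ = C * ε ^ Fintype.card ι * abv b ^ Fintype.card ι := by rw [mul_pow]; ring
      _ ≤ C * ε * abv b ^ Fintype.card ι := by
          gcongr
          exact pow_le_of_le_one hε.le hε1 dim_pos
      _ < 1 * abv b ^ Fintype.card ι := by
          gcongr
          rw [ε_eq, mul_one_div, div_lt_one (by positivity)]; linarith
      _ = _ := one_mul _
  exact_mod_cast this

/-- The right ideal theorem. -/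
theorem jz_ideal {E O : Type*} [EuclideanDomain E] [Infinite E] [Ring O] [Nontrivial O]
    [Algebra E O] [Module.Free E O] [Module.Finite E O]
    {abv : AbsoluteValue E ℤ} (adm : abv.IsAdmissible)
    (hinv : ∀ b : O, b ≠ 0 → ∃ (b' : O) (e : E), e ≠ 0 ∧ b * b' = algebraMap E O e ∧
      b' * b = algebraMap E O e) :
    ∃ c : E, c ≠ 0 ∧ ∀ I : Submodule E O, (∀ x ∈ I, ∀ y : O, x * y ∈ I) → I ≠ ⊥ →
      ∃ b ∈ I, b ≠ 0 ∧ ∀ a ∈ I, ∃ q : O, c • a = b * q := by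
  classical
  let bS := Module.Free.chooseBasis E O
  obtain ⟨T, hT, happ⟩ := jz_approx adm bS
  refine ⟨∏ r ∈ T, r, Finset.prod_ne_zero_iff.mpr fun r hr h => hT (h ▸ hr), ?_⟩
  intro I hI hne
  obtain ⟨_, ⟨b, b_mem, b_ne, rfl⟩, min⟩ := @Int.exists_least_of_bdd
      (fun a => ∃ b ∈ I, b ≠ (0 : O) ∧ abv (Algebra.norm E b) = a)
    ⟨0, by rintro _ ⟨b, _, _, rfl⟩; exact abv.nonneg _⟩
    (by
      obtain ⟨b, b_mem, b_ne_zero⟩ := (Submodule.ne_bot_iff _).mp hne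
      exact ⟨_, ⟨b, b_mem, b_ne_zero, rfl⟩⟩)
  refine ⟨b, b_mem, b_ne, fun a ha => ?_⟩
  obtain ⟨b', e, he, h1, h2⟩ := hinv b b_ne
  obtain ⟨q, r, hr, hlt⟩ := happ (b' * a) e he
  have heq : r • a = b * q := by
    by_contra hcon
    have hz : r • a - b * q ≠ 0 := sub_ne_zero.mpr hcon
    have hmem : r • a - b * q ∈ I := I.sub_mem (I.smul_mem _ ha) (hI _ b_mem _)
    have := min _ ⟨_, hmem, hz, rfl⟩
    have e1 : r • (b' * a) - e • q = b' * (r • a - b * q) := by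
      rw [mul_sub, ← mul_assoc, h2, Algebra.smul_def e, mul_smul_comm]
    rw [e1, ← h2] at hlt
    simp only [map_mul] at hlt
    have := lt_of_mul_lt_mul_left hlt (abv.nonneg _)
    omega
  refine ⟨(∏ s ∈ T.erase r, s) • q, ?_⟩
  rw [← Finset.prod_erase_mul T _ hr, mul_smul, heq, mul_smul_comm]


def JZFull {E V : Type*} [CommRing E] [AddCommGroup V] [Module E V] (M : Submodule E V) : Prop :=
  ∀ v : V, ∃ e : E, e ≠ 0 ∧ e • v ∈ M

def jzTw {E B V : Type*} [CommRing E] [Ring B] [Algebra E B] [AddCommGroup V] [Module E V]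
    [Module B V] [IsScalarTower E B V] (g : V ≃ₗ[B] V) (M : Submodule E V) : Submodule E V :=
  M.comap (g.symm.toLinearMap.restrictScalars E)

def JZ {E B : Type*} [CommRing E] [Ring B] [Algebra E B] (Λ : Submodule E B)
    (V : Type*) [AddCommGroup V] [Module E V] [Module B V] [IsScalarTower E B V] : Prop :=
  ∃ S : Set (Submodule E V), S.Finite ∧ ∀ M : Submodule E V, M.FG → JZFull M →
    (∀ a ∈ Λ, ∀ m ∈ M, a • m ∈ M) → ∃ g : V ≃ₗ[B] V, jzTw g M ∈ S

section
variable {E B V : Type*} [CommRing E] [Ring B] [Algebra E B] [AddCommGroup V] [Module E V]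
    [Module B V] [IsScalarTower E B V]

theorem mem_jzTw {g : V ≃ₗ[B] V} {M : Submodule E V} {v : V} : v ∈ jzTw g M ↔ g.symm v ∈ M :=
  Iff.rfl

theorem jzTw_trans (g h : V ≃ₗ[B] V) (M : Submodule E V) :
    jzTw (g.trans h) M = jzTw h (jzTw g M) := rfl

theorem jz_fg_comap {W : Type*} [AddCommGroup W] [Module E W] [Module B W]
    [IsScalarTower E B W] (g : V ≃ₗ[B] W) {M : Submodule E W} (hM : M.FG) :
    (M.comap (g.toLinearMap.restrictScalars E)).FG := by
  have : M.comap (g.toLinearMap.restrictScalars E) =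
      M.map (g.symm.toLinearMap.restrictScalars E) := by
    ext v
    simp only [Submodule.mem_comap, Submodule.mem_map]
    constructor
    · intro h
      exact ⟨_, h, by simp⟩
    · rintro ⟨w, hw, rfl⟩
      simpa using hw
  rw [this]
  exact hM.map _

theorem jz_transport {Λ : Submodule E B} {W : Type*} [AddCommGroup W] [Module E W] [Module B W]
    [IsScalarTower E B W] (f : V ≃ₗ[B] W) (h : JZ Λ V) : JZ Λ W := by
  obtain ⟨S, hS, H⟩ := h
  refine ⟨(fun N => Submodule.comap (f.symm.toLinearMap.restrictScalars E) N) '' S, hS.image _, ?_⟩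
  intro M hfg hfull hst
  obtain ⟨g, hg⟩ := H (M.comap (f.toLinearMap.restrictScalars E)) (jz_fg_comap f hfg)
    (fun v => by
      obtain ⟨e, he, h⟩ := hfull (f v)
      refine ⟨e, he, ?_⟩
      have e1 : f.toLinearMap.restrictScalars E (e • v) = e • f v := map_smul _ _ _
      rw [Submodule.mem_comap, e1]
      exact h)
    (fun a ha m hm => by
      have := hst a ha _ hm
      simpa using this)
  refine ⟨(f.symm.trans g).trans f, _, hg, ?_⟩
  ext v
  simp [mem_jzTw]

theorem jz_common {M N : Submodule E V} [IsDomain E] (hN : JZFull N) (hM : M.FG) :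
    ∃ c : E, c ≠ 0 ∧ ∀ x ∈ M, c • x ∈ N := by
  induction M, hM using Submodule.fg_induction with
  | singleton x =>
    obtain ⟨e, he, h⟩ := hN x
    refine ⟨e, he, fun y hy => ?_⟩
    obtain ⟨a, rfl⟩ := Submodule.mem_span_singleton.mp hy
    rw [smul_comm]
    exact N.smul_mem _ h
  | sup M₁ M₂ h1 h2 i1 i2 =>
    obtain ⟨c1, n1, k1⟩ := i1
    obtain ⟨c2, n2, k2⟩ := i2
    refine ⟨c1 * c2, mul_ne_zero n1 n2, fun y hy => ?_⟩
    obtain ⟨y1, hy1, y2, hy2, rfl⟩ := Submodule.mem_sup.mp hy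
    rw [smul_add]
    refine N.add_mem ?_ ?_
    · rw [mul_comm, mul_smul]; exact N.smul_mem _ (k1 _ hy1)
    · rw [mul_smul]; exact N.smul_mem _ (k2 _ hy2)

theorem jz_sandwich [Ring.HasFiniteQuotients E] {P : Submodule E V} (hP : P.FG) {c : E}
    (hc : c ≠ 0)
    (hinj : ∀ v w : V, c • v = c • w → v = w) :
    {M : Submodule E V | P ≤ M ∧ ∀ m ∈ M, c • m ∈ P}.Finite := by
  have : Finite (E ⧸ Ideal.span {c}) := Ring.HasFiniteQuotients.finiteQuotient (by simpa using hc)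
  have : Module.Finite E P := Module.Finite.iff_fg.mpr hP
  have : Finite (P ⧸ (⊤ : Submodule E P)) := inferInstance
  have : Finite (P ⧸ Ideal.span {c} • (⊤ : Submodule E P)) :=
    Submodule.finite_quotient_smul _ Module.Finite.fg_top
  let Φ : Submodule E V → Set (P ⧸ Ideal.span {c} • (⊤ : Submodule E P)) := fun M =>
    {q | ∃ m ∈ M, ∃ h : c • m ∈ P, q = Submodule.Quotient.mk ⟨c • m, h⟩}
  refine Set.Finite.of_finite_image (f := Φ) (Set.toFinite _) ?_
  have key : ∀ M M' : Submodule E V, (∀ m ∈ M, c • m ∈ P) → P ≤ M' → Φ M = Φ M' → M ≤ M' := by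
    intro M M' h1 h2 heq m hm
    have : Submodule.Quotient.mk ⟨c • m, h1 m hm⟩ ∈ Φ M' := by
      rw [← heq]
      exact ⟨m, hm, h1 m hm, rfl⟩
    obtain ⟨m', hm', h, e⟩ := this
    rw [Submodule.Quotient.eq, Submodule.ideal_span_singleton_smul,
      Submodule.mem_smul_pointwise_iff_exists] at e
    obtain ⟨p, -, hp⟩ := e
    have hp' := congrArg Subtype.val hp
    simp only [Submodule.coe_smul, AddSubgroupClass.coe_sub] at hp'
    have : m = m' + p := hinj _ _ (by rw [smul_add, hp']; abel)
    rw [this]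
    exact M'.add_mem hm' (h2 p.2)
  intro M hM M' hM' heq
  exact le_antisymm (key _ _ hM.2 hM'.1 heq) (key _ _ hM'.2 hM.1 heq.symm)

theorem jz_inj (hu : ∀ e : E, e ≠ 0 → IsUnit (algebraMap E B e)) {e : E} (he : e ≠ 0)
    (v w : V) (h : e • v = e • w) : v = w := by
  rw [← algebraMap_smul B e v, ← algebraMap_smul B e w] at h
  exact (hu e he).smul_left_cancel.mp h

theorem jz_span_top (hu : ∀ e : E, e ≠ 0 → IsUnit (algebraMap E B e)) {L : Submodule E V}
    (hL : JZFull L) (W : Submodule B V) (h : ∀ l ∈ L, l ∈ W) : W = ⊤ := by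
  rw [eq_top_iff]
  intro v _
  obtain ⟨e, he, hev⟩ := hL v
  obtain ⟨u, hu⟩ := hu e he
  have := W.smul_mem (↑u⁻¹ : B) (h _ hev)
  rwa [← algebraMap_smul B e v, ← hu, smul_smul, Units.inv_mul, one_smul] at this

theorem jz_section [IsDomain E] [IsSemisimpleRing B] {W W' : Type*} [AddCommGroup W] [Module E W]
    [Module B W] [IsScalarTower E B W] [AddCommGroup W'] [Module E W'] [Module B W']
    [IsScalarTower E B W'] (hu : ∀ e : E, e ≠ 0 → IsUnit (algebraMap E B e))
    {Λ : Submodule E B} (hΛ : JZFull Λ) (L : Submodule E W') (hfg : L.FG) (hfull : JZFull L) :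
    ∃ c : E, c ≠ 0 ∧ ∀ N : Submodule E (W × W'), (∀ a ∈ Λ, ∀ m ∈ N, a • m ∈ N) →
      (∀ l, l ∈ L ↔ ∃ w, (w, l) ∈ N) → ∃ h : W' →ₗ[B] W, ∀ l ∈ L, c • (h l, l) ∈ N := by
  classical
  have hfg' := hfg
  obtain ⟨s, hs⟩ := hfg
  let p : (s → B) →ₗ[B] W' := Fintype.linearCombination B (fun i : s => (i : W'))
  have hp : Function.Surjective p := by
    rw [← LinearMap.range_eq_top]
    refine jz_span_top hu hfull _ fun l hl => ?_
    rw [← hs] at hl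
    have : Submodule.span E (s : Set W') ≤ (LinearMap.range p).restrictScalars E := by
      rw [Submodule.span_le]
      intro x hx
      exact ⟨Pi.single ⟨x, hx⟩ 1, by simp [p]⟩
    exact this hl
  obtain ⟨σ, hσ⟩ := IsSemisimpleModule.lifting_property p hp (LinearMap.id)
  have hσ' : ∀ w, p (σ w) = w := fun w => LinearMap.congr_fun hσ w
  have hfullpi : JZFull (Submodule.pi Set.univ (fun _ : s => Λ)) := by
    intro v
    choose e he hev using fun i => hΛ (v i)
    refine ⟨∏ i, e i, Finset.prod_ne_zero_iff.mpr fun i _ => he i, ?_⟩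
    intro i _
    rw [← Finset.prod_erase_mul _ _ (Finset.mem_univ i), mul_smul]
    exact Λ.smul_mem _ (hev i)
  obtain ⟨c, hc, hcL⟩ := jz_common hfullpi (hfg'.map (σ.restrictScalars E))
  refine ⟨c, hc, fun N hN hNL => ?_⟩
  have hlift : ∀ i : s, ∃ w, (w, (i : W')) ∈ N := fun i =>
    (hNL _).mp (hs ▸ Submodule.subset_span i.2)
  choose n hn using hlift
  let q : (s → B) →ₗ[B] W := Fintype.linearCombination B n
  refine ⟨q ∘ₗ σ, fun l hl => ?_⟩
  have hx := hcL _ (Submodule.mem_map_of_mem hl)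
  have e1 : c • ((q ∘ₗ σ) l, l) = ∑ i : s, (c • σ l) i • (n i, (i : W')) := by
    have h2 : l = ∑ i : s, σ l i • (i : W') := by
      conv_lhs => rw [← hσ' l]
      simp [p, Fintype.linearCombination_apply]
    have h3 : (q ∘ₗ σ) l = ∑ i : s, σ l i • n i := by
      simp [q, Fintype.linearCombination_apply]
    simp only [Prod.smul_mk, Pi.smul_apply, smul_assoc]
    ext
    · rw [Prod.fst_sum]
      simp only
      rw [← Finset.smul_sum, h3]
    · rw [Prod.snd_sum]
      simp only
      rw [← Finset.smul_sum, ← h2]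
  rw [e1]
  exact N.sum_mem fun i _ => hN _ (hx i (Set.mem_univ _)) _ (hn i)

theorem jz_prod [IsDomain E] [Ring.HasFiniteQuotients E] [IsSemisimpleRing B] {W W' : Type*}
    [AddCommGroup W] [Module E W]
    [Module B W] [IsScalarTower E B W] [AddCommGroup W'] [Module E W'] [Module B W']
    [IsScalarTower E B W'] (hu : ∀ e : E, e ≠ 0 → IsUnit (algebraMap E B e))
    {Λ : Submodule E B} (hΛ : JZFull Λ) (H1 : JZ Λ W) (H2 : JZ Λ W') : JZ Λ (W × W') := by
  classical
  obtain ⟨S1, f1, H1⟩ := H1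
  obtain ⟨S2, f2, H2⟩ := H2
  have hch : ∀ L : Submodule E W', ∃ c : E, c ≠ 0 ∧ (L.FG → JZFull L →
      ∀ N : Submodule E (W × W'), (∀ a ∈ Λ, ∀ m ∈ N, a • m ∈ N) →
      (∀ l, l ∈ L ↔ ∃ w, (w, l) ∈ N) → ∃ h : W' →ₗ[B] W, ∀ l ∈ L, c • (h l, l) ∈ N) := by
    intro L
    by_cases h : L.FG ∧ JZFull L
    · obtain ⟨c, hc, h'⟩ := jz_section (W := W) hu hΛ L h.1 h.2
      exact ⟨c, hc, fun _ _ => h'⟩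
    · exact ⟨1, one_ne_zero, fun h1 h2 => absurd ⟨h1, h2⟩ h⟩
  choose c hc hcL using hch
  let P : Submodule E W → Submodule E W' → Submodule E (W × W') := fun N1 L =>
    N1.prod (L.map (LinearMap.lsmul E W' (c L)))
  refine ⟨⋃ N1 ∈ S1, ⋃ L ∈ S2, {M | N1.FG ∧ L.FG ∧ P N1 L ≤ M ∧ ∀ m ∈ M, (c L * c L) • m ∈ P N1 L},
    f1.biUnion fun N1 _ => f2.biUnion fun L _ => ?_, ?_⟩
  · by_cases h : N1.FG ∧ L.FG
    · refine (jz_sandwich (P := P N1 L) (h.1.prod (h.2.map _)) (mul_ne_zero (hc L) (hc L))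
        (fun v w => jz_inj hu (mul_ne_zero (hc L) (hc L)) v w)).subset ?_
      intro M hM
      exact hM.2.2
    · convert Set.finite_empty
      ext M
      simp only [Set.mem_ofPred_eq, Set.mem_empty_iff_false, iff_false]
      exact fun hM => h ⟨hM.1, hM.2.1⟩
  intro M hfg hfull hst
  have : IsNoetherian E M := isNoetherian_of_fg_of_noetherian M hfg
  let N1 : Submodule E W := M.comap (LinearMap.inl E W W')
  let L : Submodule E W' := M.map (LinearMap.snd E W W')
  have hN1fg : N1.FG := by
    refine Submodule.fg_of_fg_map_injective (LinearMap.inl E W W') LinearMap.inl_injective ?_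
    refine (isNoetherian_submodule.mp this) _ ?_
    exact Submodule.map_comap_le _ _
  obtain ⟨g1, hg1⟩ := H1 N1 hN1fg
    (fun w => by
      obtain ⟨e, he, h⟩ := hfull (w, 0)
      exact ⟨e, he, by simpa [N1] using h⟩)
    (fun a ha m hm => by simpa [N1] using hst a ha _ hm)
  obtain ⟨g2, hg2⟩ := H2 L (hfg.map _)
    (fun w => by
      obtain ⟨e, he, h⟩ := hfull (0, w)
      exact ⟨e, he, _, h, by simp⟩)
    (by
      rintro a ha _ ⟨m, hm, rfl⟩
      exact ⟨_, hst a ha _ hm, rfl⟩)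
  let M' := jzTw (g1.prodCongr g2) M
  have hM' : ∀ x : W × W', x ∈ M' ↔ (g1.symm x.1, g2.symm x.2) ∈ M := fun x => Iff.rfl
  have hN1' : ∀ w, w ∈ jzTw g1 N1 ↔ (w, (0 : W')) ∈ M' := by
    intro w
    rw [hM', mem_jzTw]
    simp [N1]
  have hL' : ∀ l, l ∈ jzTw g2 L ↔ ∃ w, (w, l) ∈ M' := by
    intro l
    simp only [hM', mem_jzTw]
    constructor
    · rintro ⟨⟨w, l'⟩, hm, h⟩
      refine ⟨g1 w, ?_⟩
      have h' : l' = g2.symm l := h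
      simpa [h'] using hm
    · rintro ⟨w, hw⟩
      exact ⟨_, hw, rfl⟩
  have hLfg : (jzTw g2 L).FG := jz_fg_comap g2.symm (hfg.map _)
  have hNfg : (jzTw g1 N1).FG := jz_fg_comap g1.symm hN1fg
  have hst' : ∀ a ∈ Λ, ∀ m ∈ M', a • m ∈ M' := by
    intro a ha m hm
    rw [hM'] at hm ⊢
    simpa using hst a ha _ hm
  have hLfull : JZFull (jzTw g2 L) := by
    intro v
    obtain ⟨e, he, h⟩ := hfull (0, g2.symm v)
    refine ⟨e, he, _, h, ?_⟩
    have : g2.symm.toLinearMap.restrictScalars E (e • v) = e • g2.symm v := map_smul _ _ _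
    rw [this]
    simp
  obtain ⟨h, hh⟩ := hcL (jzTw g2 L) hLfg hLfull M' hst' hL'
  let g3 : (W × W') ≃ₗ[B] (W × W') :=
    { toFun := fun x => (x.1 - h x.2, x.2)
      invFun := fun x => (x.1 + h x.2, x.2)
      map_add' := fun x y => by ext <;> simp; abel
      map_smul' := fun x y => by ext <;> simp [smul_sub]
      left_inv := fun x => by ext <;> simp
      right_inv := fun x => by ext <;> simp }
  refine ⟨(g1.prodCongr g2).trans g3, ?_⟩
  rw [jzTw_trans]
  simp only [Set.mem_iUnion]
  refine ⟨_, hg1, _, hg2, hNfg, hLfg, ?_, ?_⟩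
  · rintro ⟨w, l'⟩ ⟨hw, l, hl, hl'⟩
    have hl'' : l' = c (jzTw g2 L) • l := hl'.symm
    subst hl''
    have h1 := M'.add_mem ((hN1' w).mp hw) (hh l hl)
    have e1 : g3.symm (w, c (jzTw g2 L) • l) = (w, 0) + c (jzTw g2 L) • (h l, l) := by
      have : h (c (jzTw g2 L) • l) = c (jzTw g2 L) • h l := (h.restrictScalars E).map_smul _ _
      change (w + h (c (jzTw g2 L) • l), c (jzTw g2 L) • l) = _
      rw [this]; simp
    rw [mem_jzTw, e1]
    exact h1
  · rintro ⟨w, l⟩ hm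
    have hm' : (w + h l, l) ∈ M' := hm
    have hl : l ∈ jzTw g2 L := (hL' l).mpr ⟨_, hm'⟩
    refine ⟨?_, c (jzTw g2 L) • l, (jzTw g2 L).smul_mem _ hl, ?_⟩
    · have h1 := M'.sub_mem (M'.smul_mem (c (jzTw g2 L)) hm') (hh l hl)
      have e1 : c (jzTw g2 L) • (w + h l, l) - c (jzTw g2 L) • (h l, l) = (c (jzTw g2 L) • w, (0 : W')) := by
        rw [← smul_sub]; simp
      rw [e1, ← hN1'] at h1
      change (c (jzTw g2 L) * c (jzTw g2 L)) • w ∈ _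
      rw [mul_smul]
      exact (jzTw g1 N1).smul_mem _ h1
    · simp [mul_smul]
end


theorem jz_simple_aux {E B V D : Type*} [EuclideanDomain E] [Infinite E]
    [Ring.HasFiniteQuotients E] [Ring B] [Algebra E B] [AddCommGroup V] [Module E V]
    [Module B V] [IsScalarTower E B V] [DivisionRing D] [Algebra E D] [Module D V]
    [IsScalarTower E D V] [SMulCommClass D B V] [Nontrivial V]
    {abv : AbsoluteValue E ℤ} (adm : abv.IsAdmissible)
    (hu : ∀ e : E, e ≠ 0 → IsUnit (algebraMap E B e))
    {Λ : Submodule E B} (hΛ : JZFull Λ)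
    (hdens : Module.Finite D V → ∀ f : V →ₗ[D] V, ∃ a : B, ∀ v, a • v = f v)
    (M0 : Submodule E V) (hM0 : M0.FG) (hM0f : JZFull M0) : JZ Λ V := by
  classical
  have hinj : ∀ e : E, e ≠ 0 → ∀ v w : V, e • v = e • w → v = w :=
    fun e he v w => jz_inj hu he v w
  have hED : ∀ e : E, e ≠ 0 → algebraMap E D e ≠ 0 := by
    intro e he h
    obtain ⟨v, hv⟩ := exists_ne (0 : V)
    apply hv
    apply hinj e he
    rw [← algebraMap_smul D e v, h, zero_smul, smul_zero]
  have hEDinj : ∀ e : E, e ≠ 0 → ∀ v w : D, e • v = e • w → v = w := by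
    intro e he v w h
    rw [Algebra.smul_def, Algebra.smul_def] at h
    exact mul_left_cancel₀ (hED e he) h
  have hDcomm : ∀ (e : E) (d : D) (v : V), d • e • v = e • d • v := by
    intro e d v
    rw [← algebraMap_smul D e v, ← algebraMap_smul D e (d • v), smul_smul, smul_smul,
      Algebra.commutes]
  have hM0n : IsNoetherian E M0 := isNoetherian_of_fg_of_noetherian M0 hM0
  let ρ : D → V →ₗ[E] V := fun d =>
    { toFun := fun v => d • v
      map_add' := smul_add d
      map_smul' := fun e v => hDcomm e d v }
  let τ : V → D →ₗ[E] V := fun v => (LinearMap.toSpanSingleton D V v).restrictScalars E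
  have hτ : ∀ v d, τ v d = d • v := fun v d => rfl
  have hτinj : ∀ v, v ≠ 0 → Function.Injective (τ v) := by
    intro v hv x y hxy
    simp only [hτ] at hxy
    exact smul_left_injective D hv hxy
  let O : Subalgebra E D :=
    { carrier := {x | ∀ m ∈ M0, x • m ∈ M0}
      mul_mem' := fun {x y} hx hy m hm => by rw [mul_smul]; exact hx _ (hy _ hm)
      add_mem' := fun {x y} hx hy m hm => by rw [add_smul]; exact M0.add_mem (hx _ hm) (hy _ hm)
      algebraMap_mem' := fun e m hm => by rw [algebraMap_smul]; exact M0.smul_mem _ hm }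
  have hOmem : ∀ x, x ∈ O ↔ ∀ m ∈ M0, x • m ∈ M0 := fun x => Iff.rfl
  obtain ⟨m0, hm0, hm0ne⟩ : ∃ m ∈ M0, m ≠ 0 := by
    obtain ⟨v, hv⟩ := exists_ne (0 : V)
    obtain ⟨e, he, h⟩ := hM0f v
    exact ⟨_, h, fun h0 => hv (hinj e he _ _ (by rw [h0, smul_zero]))⟩
  have hOfg : (Subalgebra.toSubmodule O).FG := by
    refine Submodule.fg_of_fg_map_injective (τ m0) (hτinj _ hm0ne) ?_
    refine (isNoetherian_submodule.mp hM0n) _ ?_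
    rintro _ ⟨x, hx, rfl⟩
    exact hx m0 hm0
  have hOfull : JZFull (Subalgebra.toSubmodule O) := by
    intro x
    obtain ⟨c, hc, h⟩ := jz_common hM0f (hM0.map (ρ x))
    refine ⟨c, hc, fun m hm => ?_⟩
    rw [smul_assoc]
    exact h _ ⟨m, hm, rfl⟩
  have : Module.Finite E O := Module.Finite.iff_fg.mpr hOfg
  have : Module.IsTorsionFree E O := by
    rw [Module.isTorsionFree_iff_smul_eq_zero]
    intro e x h
    by_cases he : e = 0
    · exact Or.inl he
    · right
      apply Subtype.ext
      exact hEDinj e he _ _ (by rw [ZeroMemClass.coe_zero, smul_zero]; exact congrArg Subtype.val h)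
  have : Module.Free E O := inferInstance
  obtain ⟨c0, hc0, hideal⟩ := jz_ideal (O := O) adm (by
    intro b hb
    have hb' : (b : D) ≠ 0 := fun h => hb (Subtype.ext h)
    obtain ⟨e, he, h⟩ := hOfull (b : D)⁻¹
    refine ⟨⟨_, h⟩, e, he, Subtype.ext ?_, Subtype.ext ?_⟩
    · change (b : D) * (e • (b : D)⁻¹) = algebraMap E D e
      rw [mul_smul_comm, mul_inv_cancel₀ hb', Algebra.algebraMap_eq_smul_one]
    · change (e • (b : D)⁻¹) * (b : D) = algebraMap E D e
      rw [smul_mul_assoc, inv_mul_cancel₀ hb', Algebra.algebraMap_eq_smul_one])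
  have hVfin : Module.Finite D V := by
    obtain ⟨s, hs⟩ := hM0
    refine ⟨⟨s, ?_⟩⟩
    refine jz_span_top (E := E) (B := D) (fun e he => (hED e he).isUnit) hM0f _ ?_
    intro l hl
    rw [← hs] at hl
    exact Submodule.span_le_restrictScalars E D _ hl
  let n := Module.finrank D V
  let b : Basis (Fin n) D V := Module.finBasis D V
  have hn : 0 < n := Module.finrank_pos
  let X : Submodule E D :=
    { carrier := {x | ∀ i j, ∃ a ∈ Λ, ∀ k, a • b k = if k = i then x • b j else 0}
      zero_mem' := fun i j => ⟨0, Λ.zero_mem, fun k => by simp⟩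
      add_mem' := fun {x y} hx hy i j => by
        obtain ⟨a, ha, h⟩ := hx i j
        obtain ⟨a', ha', h'⟩ := hy i j
        refine ⟨a + a', Λ.add_mem ha ha', fun k => ?_⟩
        rw [add_smul, h, h']
        split_ifs <;> simp [add_smul]
      smul_mem' := fun e x hx i j => by
        obtain ⟨a, ha, h⟩ := hx i j
        refine ⟨e • a, Λ.smul_mem _ ha, fun k => ?_⟩
        rw [smul_assoc, h]
        split_ifs <;> simp [smul_assoc] }
  have hXfull : JZFull X := by
    intro x
    have h1 : ∀ p : Fin n × Fin n, ∃ a : B, ∀ k, a • b k = if k = p.1 then x • b p.2 else 0 := by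
      intro p
      obtain ⟨a, ha⟩ := hdens hVfin (b.constr ℕ (fun k => if k = p.1 then x • b p.2 else 0))
      refine ⟨a, fun k => ?_⟩
      rw [ha, Basis.constr_basis]
    choose a ha using h1
    choose e he hea using fun p => hΛ (a p)
    refine ⟨∏ p, e p, Finset.prod_ne_zero_iff.mpr fun p _ => he p, fun i j => ?_⟩
    refine ⟨(∏ p, e p) • a (i, j), ?_, fun k => ?_⟩
    · rw [← Finset.prod_erase_mul _ _ (Finset.mem_univ (i, j)), mul_smul]
      exact Λ.smul_mem _ (hea _)
    · rw [smul_assoc, ha]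
      split_ifs <;> simp [smul_assoc]
  obtain ⟨c, hc, hcX⟩ := jz_common hXfull hOfg
  let P0 : Submodule E V := ⨆ i, (Subalgebra.toSubmodule O).map (τ (b i))
  have hP0fg : P0.FG := Submodule.fg_iSup _ fun i => hOfg.map _
  have hccc : c * (c * c0) ≠ 0 := mul_ne_zero hc (mul_ne_zero hc hc0)
  refine ⟨_, jz_sandwich (P := P0.map (LinearMap.lsmul E V c)) (hP0fg.map _) hccc
    (hinj _ hccc), ?_⟩
  intro M hMfg hMfull hMst
  have hMn : IsNoetherian E M := isNoetherian_of_fg_of_noetherian M hMfg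
  let L : Submodule E D := ⨅ j, M.comap (τ (b j))
  have hLmem : ∀ d, d ∈ L ↔ ∀ j, d • b j ∈ M := by
    intro d
    simp only [L, Submodule.mem_iInf, Submodule.mem_comap, hτ]
  have hLfg : L.FG := by
    refine Submodule.fg_of_fg_map_injective (τ (b ⟨0, hn⟩)) (hτinj _ (b.ne_zero _)) ?_
    refine (isNoetherian_submodule.mp hMn) _ ?_
    rintro _ ⟨x, hx, rfl⟩
    exact (hLmem x).mp hx _
  let L2 : Submodule E D := L * Subalgebra.toSubmodule O
  have hLL2 : L ≤ L2 := by
    intro l hl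
    have := Submodule.mul_mem_mul hl (show (1 : D) ∈ Subalgebra.toSubmodule O from O.one_mem)
    rwa [mul_one] at this
  have hL2O : ∀ y ∈ L2, ∀ o ∈ O, y * o ∈ L2 := by
    intro y hy o ho
    have : y * o ∈ L * Subalgebra.toSubmodule O * Subalgebra.toSubmodule O :=
      Submodule.mul_mem_mul hy ho
    rwa [mul_assoc, (Subalgebra.isIdempotentElem_toSubmodule O).eq] at this
  have hcL2 : ∀ y ∈ L2, c • y ∈ L := by
    intro y hy
    induction hy using Submodule.mul_induction_on' with
    | mem_mul_mem l hl o ho =>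
      rw [hLmem]
      intro j
      obtain ⟨a, ha, h⟩ := hcX o ho j j
      have h1 := h j
      rw [if_pos rfl] at h1
      have h2 := hMst a ha _ ((hLmem l).mp hl j)
      rw [← smul_comm, h1, smul_smul, mul_smul_comm] at h2
      exact h2
    | add x _ y _ hx hy =>
      rw [smul_add]
      exact L.add_mem hx hy
  obtain ⟨e, he, heO⟩ := jz_common hOfull (hLfg.mul hOfg : L2.FG)
  let I : Submodule E O := (L2.map (LinearMap.lsmul E D e)).comap O.val.toLinearMap
  have hImem : ∀ x : O, x ∈ I ↔ ∃ y ∈ L2, e • y = x := fun x => Iff.rfl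
  obtain ⟨b0, hb0I, hb0, hb0q⟩ := hideal I (by
      intro x hx y
      obtain ⟨z, hz, hzx⟩ := (hImem x).mp hx
      refine (hImem _).mpr ⟨z * y, hL2O z hz _ y.2, ?_⟩
      rw [← smul_mul_assoc, hzx]
      rfl)
    (by
      choose e' he' h' using fun j => hMfull (b j)
      have hl : (∏ j, e' j) • (1 : D) ∈ L := by
        rw [hLmem]
        intro j
        rw [smul_assoc, one_smul, ← Finset.prod_erase_mul _ _ (Finset.mem_univ j), mul_smul]
        exact M.smul_mem _ (h' j)
      have hne : ∏ j, e' j ≠ 0 := Finset.prod_ne_zero_iff.mpr fun j _ => he' j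
      rw [Submodule.ne_bot_iff]
      refine ⟨⟨_, heO _ (hLL2 hl)⟩, ⟨_, hLL2 hl, rfl⟩, ?_⟩
      intro h0
      have h1 := congrArg Subtype.val h0
      rw [ZeroMemClass.coe_zero] at h1
      have h2 := hEDinj e he _ 0 (h1.trans (smul_zero e).symm)
      have h3 := hEDinj _ hne 1 0 (h2.trans (smul_zero _).symm)
      exact one_ne_zero h3)
  obtain ⟨y0, hy0, hy0b⟩ := (hImem _).mp hb0I
  have hy0ne : y0 ≠ 0 := by
    rintro rfl
    rw [smul_zero] at hy0b
    exact hb0 (Subtype.ext hy0b.symm)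
  let g : V ≃ₗ[B] V :=
    { toFun := fun v => y0⁻¹ • v
      invFun := fun v => y0 • v
      map_add' := smul_add _
      map_smul' := fun a v => smul_comm _ _ _
      left_inv := fun v => by simp [smul_smul, mul_inv_cancel₀ hy0ne]
      right_inv := fun v => by simp [smul_smul, inv_mul_cancel₀ hy0ne] }
  have hg : ∀ v, v ∈ jzTw g M ↔ y0 • v ∈ M := fun v => Iff.rfl
  refine ⟨g, ?_, ?_⟩
  · rw [Submodule.map_le_iff_le_comap]
    refine iSup_le fun i => ?_
    rintro _ ⟨o, ho, rfl⟩
    rw [Submodule.mem_comap, hg, LinearMap.lsmul_apply, hτ, hDcomm, smul_smul, ← smul_assoc]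
    exact (hLmem _).mp (hcL2 _ (hL2O y0 hy0 o ho)) i
  · intro v hv
    rw [hg] at hv
    refine ⟨(c * c0) • v, ?_, by
      change c • (c * c0) • v = (c * (c * c0)) • v
      rw [← mul_smul]⟩
    have hd : ∀ i, c • b.repr (y0 • v) i ∈ L := by
      intro i
      rw [hLmem]
      intro j
      obtain ⟨a, ha, h⟩ := hcX 1 O.one_mem i j
      have h1 := hMst a ha _ hv
      rw [← b.sum_repr (y0 • v), Finset.smul_sum] at h1
      have h2 : ∀ k, a • b.repr (y0 • v) k • b k
          = if k = i then (c • b.repr (y0 • v) i) • b j else 0 := by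
        intro k
        rw [← smul_comm, h]
        split_ifs with hk
        · subst hk
          rw [smul_assoc, one_smul, hDcomm, smul_assoc]
        · rw [smul_zero]
      simp only [h2] at h1
      simpa using h1
    have hq : ∀ i, ∃ q ∈ O, (c * c0) • b.repr (y0 • v) i = y0 * q := by
      intro i
      obtain ⟨q, hq⟩ := hb0q ⟨_, heO _ (hLL2 (hd i))⟩ ⟨_, hLL2 (hd i), rfl⟩
      refine ⟨q, q.2, hEDinj e he _ _ ?_⟩
      have h1 := congrArg Subtype.val hq
      have h2 : c0 • e • c • b.repr (y0 • v) i = (b0 : D) * q := h1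
      rw [← smul_mul_assoc, hy0b, ← h2, smul_smul, smul_smul, smul_smul]
      congr 1
      ring
    choose q hqO hq using hq
    have hfin : (c * c0) • v = ∑ i, q i • b i := by
      have h1 : y0 • ((c * c0) • v) = y0 • ∑ i, q i • b i := by
        rw [hDcomm, ← b.sum_repr (y0 • v), Finset.smul_sum, Finset.smul_sum]
        refine Finset.sum_congr rfl fun i _ => ?_
        rw [← smul_assoc, hq, mul_smul]
      have h2 := congrArg (fun w => y0⁻¹ • w) h1
      simpa [smul_smul, inv_mul_cancel₀ hy0ne] using h2
    rw [hfin]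
    exact P0.sum_mem fun i _ => (le_iSup (fun i => (Subalgebra.toSubmodule O).map (τ (b i))) i)
      ⟨q i, hqO i, rfl⟩


theorem jz_simple {E B V : Type*} [EuclideanDomain E] [Infinite E]
    [Ring.HasFiniteQuotients E] [Ring B] [Algebra E B] [AddCommGroup V] [Module E V]
    [Module B V] [IsScalarTower E B V] [IsSimpleModule B V]
    {abv : AbsoluteValue E ℤ} (adm : abv.IsAdmissible)
    (hu : ∀ e : E, e ≠ 0 → IsUnit (algebraMap E B e))
    {Λ : Submodule E B} (hΛ : JZFull Λ) : JZ Λ V := by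
  classical
  by_cases h : ∃ M0 : Submodule E V, M0.FG ∧ JZFull M0
  · obtain ⟨M0, h1, h2⟩ := h
    have : Nontrivial V := IsSimpleModule.nontrivial B V
    have : SMulCommClass B E V := IsScalarTower.to_smulCommClass'
    refine jz_simple_aux (D := Module.End B V) adm hu hΛ ?_ M0 h1 h2
    intro hf f
    obtain ⟨a, ha⟩ := Module.Finite.toModuleEnd_moduleEnd_surjective (R := B) (M := V) f
    exact ⟨a, fun v => LinearMap.congr_fun ha v⟩
  · exact ⟨∅, Set.finite_empty, fun M h1 h2 => (h ⟨M, h1, h2⟩).elim⟩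

theorem jz_all_aux {E B : Type*} [EuclideanDomain E] [Infinite E]
    [Ring.HasFiniteQuotients E] [Ring B] [IsSemisimpleRing B] [Algebra E B]
    {abv : AbsoluteValue E ℤ} (adm : abv.IsAdmissible)
    (hu : ∀ e : E, e ≠ 0 → IsUnit (algebraMap E B e))
    {Λ : Submodule E B} (hΛ : JZFull Λ) (V : Type*) [AddCommGroup V] [Module B V]
    (h : IsFiniteLength B V) : ∀ [Module E V] [IsScalarTower E B V], JZ Λ V := by
  induction h with
  | of_subsingleton =>
    intro _ _
    refine ⟨Set.univ, ?_, fun M _ _ _ => ⟨LinearEquiv.refl _ _, trivial⟩⟩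
    refine Set.Subsingleton.finite fun M _ N _ => ?_
    exact Subsingleton.elim _ _
  | @of_simple_quotient M _ _ N _ _ ih =>
    intro _ _
    obtain ⟨N', hN'⟩ := exists_isCompl N
    let e1 : (M ⧸ N) ≃ₗ[B] N' := Submodule.quotientEquivOfIsCompl N N' hN'
    have : IsSimpleModule B N' := IsSimpleModule.congr e1.symm
    exact jz_transport (Submodule.prodEquivOfIsCompl N N' hN')
      (jz_prod hu hΛ ih (jz_simple adm hu hΛ))

theorem jz_all {E B : Type*} [EuclideanDomain E] [Infinite E]
    [Ring.HasFiniteQuotients E] [Ring B] [IsSemisimpleRing B] [Algebra E B]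
    {abv : AbsoluteValue E ℤ} (adm : abv.IsAdmissible)
    (hu : ∀ e : E, e ≠ 0 → IsUnit (algebraMap E B e))
    {Λ : Submodule E B} (hΛ : JZFull Λ) (V : Type*) [AddCommGroup V] [Module B V]
    [Module.Finite B V] [Module E V] [IsScalarTower E B V] : JZ Λ V :=
  jz_all_aux adm hu hΛ V ((IsSemisimpleModule.finite_tfae.out 0 3).mp ‹Module.Finite B V›)

theorem jz_semisimple {K A L : Type*} [Field K] [Field L] [Algebra K L] [Ring A] [Algebra K A]
    [FiniteDimensional K A] (h : IsSemisimpleRing (TensorProduct K L A)) : IsSemisimpleRing A := by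
  have : IsArtinianRing A := IsArtinianRing.of_finite K A
  rw [IsArtinianRing.isSemisimpleRing_iff_jacobson]
  obtain ⟨n, hn⟩ := IsSemiprimaryRing.isNilpotent (R := A)
  rw [eq_bot_iff]
  intro x hx
  obtain ⟨f, hf, hfx⟩ := IsSemisimpleRing.ideal_eq_span_idempotent
    (Ideal.span {(TensorProduct.tmul K (1 : L) x)})
  let P : ℕ → Submodule K (TensorProduct K L A) := fun k =>
    Submodule.span K {z | ∃ l : L, ∃ a ∈ (Ring.jacobson A) ^ k, z = TensorProduct.tmul K l a}
  have hP : ∀ k, P k * P 1 ≤ P (k + 1) := by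
    intro k
    simp only [P]
    rw [Submodule.span_mul_span, Submodule.span_le]
    rintro _ ⟨_, ⟨l, a, ha, rfl⟩, _, ⟨l', a', ha', rfl⟩, rfl⟩
    refine Submodule.subset_span ⟨l * l', a * a', ?_, ?_⟩
    · rw [Submodule.pow_one] at ha'
      rw [Submodule.pow_succ]
      exact Ideal.mul_mem_mul ha ha'
    · exact Algebra.TensorProduct.tmul_mul_tmul _ _ _ _
  have hf1 : f ∈ P 1 := by
    have : f ∈ Ideal.span {(TensorProduct.tmul K (1 : L) x)} := by
      rw [hfx]; exact Ideal.mem_span_singleton_self f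
    obtain ⟨y, rfl⟩ := Ideal.mem_span_singleton'.mp this
    clear hf hfx this
    induction y using TensorProduct.induction_on with
    | zero => rw [zero_mul]; exact Submodule.zero_mem _
    | tmul l a =>
      rw [Algebra.TensorProduct.tmul_mul_tmul]
      refine Submodule.subset_span ⟨_, _, ?_, rfl⟩
      rw [Submodule.pow_one]
      exact Ideal.mul_mem_left _ _ hx
    | add y z h1 h2 => rw [add_mul]; exact Submodule.add_mem _ h1 h2
  have hfk : ∀ k, f ∈ P (k + 1) := by
    intro k
    induction k with
    | zero => exact hf1
    | succ k ih =>
      rw [← hf.eq]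
      exact hP _ (Submodule.mul_mem_mul ih hf1)
  have hf0 : f = 0 := by
    have h1 := hfk n
    have : P (n + 1) = ⊥ := by
      simp only [P]
      rw [Submodule.span_eq_bot]
      rintro _ ⟨l, a, ha, rfl⟩
      rw [Submodule.pow_succ, hn, zero_mul] at ha
      rw [(Submodule.mem_bot A).mp ha, TensorProduct.tmul_zero]
    rw [this] at h1
    exact (Submodule.mem_bot K).mp h1
  rw [hf0] at hfx
  have h1 : TensorProduct.tmul K (1 : L) x = 0 := by
    have := Ideal.mem_span_singleton_self (TensorProduct.tmul K (1 : L) x)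
    rw [hfx] at this
    simpa using this
  rw [Submodule.mem_bot]
  apply Algebra.TensorProduct.includeRight_injective (R := K) (A := L) (B := A)
    (algebraMap K L).injective
  rw [map_zero]
  exact h1


theorem jz_lattice (E F : Type*) {V : Type*} [CommRing E] [IsDomain E] [Field F] [Algebra E F]
    [IsFractionRing E F] [AddCommGroup V] [Module E V] [Module F V] [IsScalarTower E F V]
    [Module.Finite F V] : ∃ L : Submodule E V, L.FG ∧ JZFull L := by
  classical
  let b := Module.finBasis F V
  refine ⟨Submodule.span E (Set.range b), Submodule.fg_span (Set.finite_range b), fun v => ?_⟩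
  obtain ⟨c, hc⟩ := IsLocalization.exist_integer_multiples (nonZeroDivisors E) Finset.univ
    (fun i => b.repr v i)
  refine ⟨c, nonZeroDivisors.ne_zero c.2, ?_⟩
  rw [← b.sum_repr v, Finset.smul_sum]
  refine Submodule.sum_mem _ fun i _ => ?_
  obtain ⟨a, ha⟩ := hc i (Finset.mem_univ i)
  rw [← smul_assoc]
  change ((c : E) • b.repr v i) • b i ∈ _
  rw [← ha, algebraMap_smul]
  exact Submodule.smul_mem _ _ (Submodule.subset_span ⟨i, rfl⟩)

theorem jz_idealIso {R K A : Type*} [CommRing R] [IsDedekindDomain R] [Field K] [Algebra R K]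
    [IsFractionRing R K] [Ring A] [Algebra K A] [FiniteDimensional K A]
    [Algebra R A] [IsScalarTower R K A] (Λ : Subalgebra R A) (I I' : LocallyFreeIdeal R K A Λ)
    (g : A ≃+ A) (hg : ∀ x a, g (x * a) = g x * a)
    (h : ∀ x, x ∈ I.carrier ↔ g x ∈ I'.carrier) : IdealIso Λ I I' := by
  have hm : ∀ (J : LocallyFreeIdeal R K A Λ) (z : Fin 1 → A),
      z ∈ sumLat ![J.carrier] ↔ z 0 ∈ J.carrier := by
    intro J z
    simp [sumLat, AddSubgroup.mem_pi]
  refine ⟨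
    { toFun := fun z => ⟨fun i => g (z.1 i), (hm _ _).mpr ((h _).mp ((hm _ _).mp z.2))⟩
      invFun := fun z => ⟨fun i => g.symm (z.1 i), (hm _ _).mpr ((h _).mpr (by
        simpa using (hm _ _).mp z.2))⟩
      left_inv := fun z => by ext i; simp
      right_inv := fun z => by ext i; simp
      map_add' := fun z w => by ext i; simp }, ?_⟩
  intro z a _ _
  funext i
  exact hg _ _

theorem jz_bridge {E R K A : Type*} [EuclideanDomain E] [Infinite E]
    [Ring.HasFiniteQuotients E] {abv : AbsoluteValue E ℤ} (adm : abv.IsAdmissible)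
    [CommRing R] [IsDedekindDomain R] [Field K] [Algebra R K]
    [IsFractionRing R K] [Ring A] [Algebra K A] [FiniteDimensional K A]
    [Algebra R A] [IsScalarTower R K A] [IsSemisimpleRing A]
    [Algebra E R] [Algebra E K] [IsScalarTower E R K] [Algebra E A] [IsScalarTower E K A]
    (hinj : Function.Injective (algebraMap E K))
    (hdvd : ∀ r : R, r ≠ 0 → ∃ e : E, e ≠ 0 ∧ r ∣ algebraMap E R e)
    (hlat : ∃ L : Submodule E A, L.FG ∧ JZFull L)
    (Λ : Subalgebra R A) (hΛ : Submodule.span K (Λ : Set A) = ⊤) :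
    Finite (Quot (IdealIso (R := R) (K := K) (A := A) Λ)) := by
  classical
  have : IsScalarTower E R A := by
    refine IsScalarTower.of_algebraMap_eq fun e => ?_
    rw [IsScalarTower.algebraMap_apply E K A, IsScalarTower.algebraMap_apply E R K,
      ← IsScalarTower.algebraMap_apply R K A]
  have hΛfull : JZFull ((Subalgebra.toSubmodule Λ).restrictScalars E) := by
    intro a
    have ha : a ∈ Submodule.span K (Λ : Set A) := by rw [hΛ]; trivial
    induction ha using Submodule.span_induction with
    | mem x hx => exact ⟨1, one_ne_zero, by rw [one_smul]; exact hx⟩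
    | zero => exact ⟨1, one_ne_zero, by rw [smul_zero]; exact Submodule.zero_mem _⟩
    | add x y _ _ hx hy =>
      obtain ⟨e, he, h⟩ := hx
      obtain ⟨e', he', h'⟩ := hy
      refine ⟨e * e', mul_ne_zero he he', ?_⟩
      rw [smul_add]
      refine Submodule.add_mem _ ?_ ?_
      · rw [mul_comm, mul_smul]; exact Submodule.smul_mem _ _ h
      · rw [mul_smul]; exact Submodule.smul_mem _ _ h'
    | smul k x _ hx =>
      obtain ⟨e, he, h⟩ := hx
      obtain ⟨r, s, hs, rfl⟩ := IsFractionRing.div_surjective (A := R) k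
      obtain ⟨e', he', t, ht⟩ := hdvd s (nonZeroDivisors.ne_zero hs)
      refine ⟨e' * e, mul_ne_zero he' he, ?_⟩
      have hs0 : algebraMap R K s ≠ 0 := by
        simpa using nonZeroDivisors.ne_zero hs
      have : (e' * e) • (algebraMap R K r / algebraMap R K s) • x = (t * r) • e • x := by
        rw [mul_comm, mul_smul, ← algebraMap_smul R e' ((algebraMap R K r / algebraMap R K s) • x),
          ht, ← algebraMap_smul K (s * t), smul_smul, smul_comm (t * r) e,
          ← algebraMap_smul K (t * r) x]
        congr 2
        rw [map_mul, map_mul]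
        field_simp
      rw [this]
      exact Λ.smul_mem h _
  obtain ⟨W0, hW0, hW0f⟩ := hlat
  obtain ⟨c, hc, hcW⟩ := jz_common hW0f (hW0.mul hW0)
  obtain ⟨d, hd, hdW⟩ := jz_common hΛfull hW0
  let W : Submodule E A := W0.map (LinearMap.lsmul E A (c * d))
  have hWfg : W.FG := hW0.map _
  have hWfull : JZFull W := by
    intro a
    obtain ⟨e, he, h⟩ := hW0f a
    refine ⟨(c * d) * e, mul_ne_zero (mul_ne_zero hc hd) he, _, h, ?_⟩
    rw [mul_smul]
    rfl
  have hWΛ : ∀ w ∈ W, w ∈ Λ := by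
    rintro _ ⟨w, hw, rfl⟩
    rw [LinearMap.lsmul_apply, mul_smul]
    have := ((Subalgebra.toSubmodule Λ).restrictScalars E).smul_mem c (hdW w hw)
    exact this
  have hWW : W * W ≤ W := by
    rw [Submodule.mul_le]
    rintro _ ⟨w, hw, rfl⟩ _ ⟨w', hw', rfl⟩
    refine ⟨d • c • (w * w'), W0.smul_mem _ (hcW _ (Submodule.mul_mem_mul hw hw')), ?_⟩
    simp only [LinearMap.lsmul_apply, smul_mul_smul_comm, smul_smul]
    congr 1
    ring
  have hu : ∀ e : E, e ≠ 0 → IsUnit (algebraMap E Aᵐᵒᵖ e) := by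
    intro e he
    rw [MulOpposite.algebraMap_apply, isUnit_op, IsScalarTower.algebraMap_apply E K A]
    refine IsUnit.map _ (IsUnit.mk0 _ ?_)
    rw [Ne, map_eq_zero_iff _ hinj]
    exact he
  have : IsScalarTower E Aᵐᵒᵖ A := inferInstance
  let ΛB : Submodule E Aᵐᵒᵖ := W.comap (MulOpposite.opLinearEquiv E).symm.toLinearMap
  have hΛB : JZFull ΛB := fun a => hWfull a.unop
  have : Module.Finite Aᵐᵒᵖ A := by
    refine ⟨⟨{1}, ?_⟩⟩
    rw [eq_top_iff]
    intro a _
    rw [Finset.coe_singleton, Submodule.mem_span_singleton]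
    exact ⟨MulOpposite.op a, one_mul a⟩
  obtain ⟨S, hS, H⟩ := jz_all adm hu hΛB A
  have hM : ∀ I : LocallyFreeIdeal R K A Λ, ∃ M : Submodule E A,
      Submodule.span R (M : Set A) = I.carrier ∧ ∃ g : A ≃ₗ[Aᵐᵒᵖ] A, jzTw g M ∈ S := by
    intro I
    obtain ⟨s, hs⟩ := I.fg
    let N : Submodule E A := Submodule.span E s
    have hNfg : N.FG := ⟨s, rfl⟩
    have hNI : ∀ x ∈ N, x ∈ I.carrier := by
      intro x hx
      rw [← hs]
      exact Submodule.span_le_restrictScalars E R _ hx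
    refine ⟨N ⊔ N * W, le_antisymm ?_ ?_, H _ ?_ ?_ ?_⟩
    · rw [Submodule.span_le]
      have : N ⊔ N * W ≤ I.carrier.restrictScalars E := by
        refine sup_le hNI ?_
        rw [Submodule.mul_le]
        exact fun m hm n hn => I.right_mul _ (hNI m hm) _ (hWΛ n hn)
      exact this
    · conv_lhs => rw [← hs]
      exact Submodule.span_mono fun x hx => (le_sup_left : N ≤ N ⊔ N * W) (Submodule.subset_span hx)
    · exact hNfg.sup (hNfg.mul hWfg)
    · intro a
      have ha : a ∈ Submodule.span K (s : Set A) := by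
        have h1 : Submodule.span K (I.carrier : Set A) ≤ Submodule.span K (s : Set A) := by
          rw [Submodule.span_le, ← hs]
          exact Submodule.span_le_restrictScalars R K _
        rw [I.spans] at h1
        exact h1 trivial
      have : ∃ e : E, e ≠ 0 ∧ e • a ∈ N * W := by
        clear H
        induction ha using Submodule.closure_induction with
        | zero => exact ⟨1, one_ne_zero, by rw [smul_zero]; exact Submodule.zero_mem _⟩
        | add x y _ _ hx hy =>
          obtain ⟨e, he, h⟩ := hx
          obtain ⟨e', he', h'⟩ := hy
          refine ⟨e * e', mul_ne_zero he he', ?_⟩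
          rw [smul_add]
          refine Submodule.add_mem _ ?_ ?_
          · rw [mul_comm, mul_smul]; exact Submodule.smul_mem _ _ h
          · rw [mul_smul]; exact Submodule.smul_mem _ _ h'
        | smul_mem k x hx =>
          obtain ⟨e, he, h⟩ := hWfull (k • 1)
          refine ⟨e, he, ?_⟩
          have h2 := Submodule.mul_mem_mul (show x ∈ N from Submodule.subset_span hx) h
          rwa [mul_smul_comm, mul_smul_comm, mul_one] at h2
      obtain ⟨e, he, h⟩ := this
      exact ⟨e, he, (le_sup_right : N * W ≤ N ⊔ N * W) h⟩
    · intro a ha m hm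
      change m * a.unop ∈ _
      have h1 : m * a.unop ∈ (N ⊔ N * W) * W := Submodule.mul_mem_mul hm ha
      rw [Submodule.sup_mul, mul_assoc] at h1
      have h2 : N * (W * W) ≤ N * W := mul_le_mul_right hWW N
      exact (le_sup_right : N * W ≤ N ⊔ N * W) ((sup_le le_rfl h2) h1)
  choose M hMspan g hgS using hM
  have hkey : ∀ I I', jzTw (g I) (M I) = jzTw (g I') (M I') → IdealIso Λ I I' := by
    intro I I' heq
    let f : A ≃ₗ[Aᵐᵒᵖ] A := (g I).trans (g I').symm
    have hfmul : ∀ x a, f (x * a) = f x * a := fun x a => f.map_smul (MulOpposite.op a) x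
    have hfM : ∀ x, x ∈ M I ↔ f x ∈ M I' := by
      intro x
      have : g I x ∈ jzTw (g I) (M I) ↔ g I x ∈ jzTw (g I') (M I') := by rw [heq]
      rw [mem_jzTw, mem_jzTw, LinearEquiv.symm_apply_apply] at this
      exact this
    let fR : A ≃ₗ[R] A :=
      { f.toAddEquiv with
        map_smul' := fun r x => by
          change f (r • x) = r • f x
          have : ∀ y : A, r • y = y * algebraMap R A r := fun y => by
            rw [Algebra.smul_def, Algebra.commutes]
          rw [this, this, hfmul] }
    refine jz_idealIso Λ I I' f.toAddEquiv hfmul ?_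
    intro x
    have h1 : Submodule.span R (M I : Set A) = (Submodule.span R (M I' : Set A)).comap
        fR.toLinearMap := by
      rw [Submodule.comap_equiv_eq_map_symm, Submodule.map_span]
      congr 1
      ext y
      constructor
      · intro hy
        exact ⟨f y, (hfM y).mp hy, f.symm_apply_apply y⟩
      · rintro ⟨z, hz, rfl⟩
        refine (hfM _).mpr ?_
        have : f (f.symm z) = z := f.apply_symm_apply z
        change f (f.symm z) ∈ _
        rw [this]
        exact hz
    rw [← hMspan I, ← hMspan I', h1]
    rfl
  have : Finite S := hS
  let Φ : LocallyFreeIdeal R K A Λ → S := fun I => ⟨_, hgS I⟩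
  refine Finite.of_surjective (fun s : Set.range Φ => Quot.mk _ s.2.choose) ?_
  intro q
  obtain ⟨I, rfl⟩ := Quot.exists_rep q
  refine ⟨⟨Φ I, I, rfl⟩, Quot.sound (hkey _ _ ?_)⟩
  exact congrArg Subtype.val (⟨Φ I, I, rfl⟩ : Set.range Φ).2.choose_spec


theorem jz_polyFinite {k : Type*} [Field k] [Finite k] :
    Ring.HasFiniteQuotients (Polynomial k) where
  finiteQuotient {I} hI := by
    obtain ⟨f, rfl⟩ := (IsPrincipalIdealRing.principal I).principal
    have hf : f ≠ 0 := by
      rintro rfl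
      simp at hI
    have : Module.Finite k (AdjoinRoot f) := (AdjoinRoot.powerBasis hf).finite
    have : Finite (AdjoinRoot f) := Module.finite_of_finite k
    exact this

theorem jz_fin_of_le {K T : Type*} [Field K] [Field T] [Algebra T K] (F0 : Subfield K)
    (h : ∀ x ∈ F0, ∃ y, algebraMap T K y = x) [hf : Module.Finite F0 K] : Module.Finite T K := by
  obtain ⟨s, hs⟩ := hf
  refine ⟨⟨s, ?_⟩⟩
  rw [eq_top_iff]
  intro x _
  have hx : x ∈ Submodule.span F0 (s : Set K) := by rw [hs]; trivial
  induction hx using Submodule.span_induction with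
  | mem x hx => exact Submodule.subset_span hx
  | zero => exact Submodule.zero_mem _
  | add x y _ _ hx hy => exact Submodule.add_mem _ (hx trivial) (hy trivial)
  | smul a x _ hx =>
    obtain ⟨y, hy⟩ := h a a.2
    have : a • x = y • x := by
      rw [Algebra.smul_def y x, hy]
      rfl
    rw [this]
    exact Submodule.smul_mem _ _ (hx trivial)

open scoped IntermediateField.algebraAdjoinAdjoin in
theorem jz_exch {k K : Type*} [Field k] [Field K] [Algebra k K] (t t' : K)
    [Module.Finite (Subfield.closure ({t} : Set K)) K] (ht' : Transcendental k t') :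
    Algebra.IsAlgebraic (Algebra.adjoin k {t'}) K := by
  have h1 : Module.Finite (IntermediateField.adjoin k {t}) K := by
    refine jz_fin_of_le (Subfield.closure ({t} : Set K)) ?_
    have : Subfield.closure ({t} : Set K) ≤ (IntermediateField.adjoin k {t}).toSubfield := by
      rw [Subfield.closure_le]
      exact IntermediateField.subset_adjoin k {t}
    intro x hx
    exact ⟨⟨x, this hx⟩, rfl⟩
  have h2 : Algebra.IsAlgebraic (Algebra.adjoin k {t}) K :=
    Algebra.IsAlgebraic.trans _ (IntermediateField.adjoin k {t}) _
  have h3 : Algebra.trdeg k K ≤ 1 := by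
    have := Algebra.IsAlgebraic.trdeg_le_cardinalMk k ({t} : Set K)
    simpa using this
  have h4 : AlgebraicIndependent k (fun _ : Unit => t') :=
    algebraicIndependent_unique_type_iff.mpr ht'
  have h5 := h4.isTranscendenceBasis_of_lift_trdeg_le_of_finite (by simpa using h3)
  have h6 := h5.isAlgebraic
  rwa [Set.range_const] at h6

theorem jz_transc {R K : Type*} [CommRing R] [IsDomain R] [Field K] [Algebra R K]
    [IsFractionRing R K] {k : Type*} [Field k] [Finite k] [Algebra k K] (t : K)
    (ht : Infinite (Subfield.closure ({t} : Set K))) :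
    ∃ r : R, Transcendental k (algebraMap R K r) := by
  by_contra hcon
  have hall : ∀ r : R, IsAlgebraic k (algebraMap R K r) := by
    intro r
    by_contra h
    exact hcon ⟨r, h⟩
  have hti : IsIntegral k t := by
    obtain ⟨r, s, hs, rfl⟩ := IsFractionRing.div_surjective (A := R) t
    rw [div_eq_mul_inv]
    exact ((hall r).mul (hall s).inv).isIntegral
  have := IntermediateField.adjoin.finiteDimensional hti
  have hfin : Finite (IntermediateField.adjoin k {t}) := Module.finite_of_finite k
  have hle : Subfield.closure ({t} : Set K) ≤ (IntermediateField.adjoin k {t}).toSubfield := by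
    rw [Subfield.closure_le]
    exact IntermediateField.subset_adjoin k {t}
  have : Finite (Subfield.closure ({t} : Set K)) :=
    Finite.of_injective (fun x => (⟨x.1, hle x.2⟩ : IntermediateField.adjoin k {t}))
      (fun x y h => Subtype.ext (Subtype.mk.inj h))
  exact not_finite (Subfield.closure ({t} : Set K))

theorem jz_dvd {E R K : Type*} [CommRing E] [IsDomain E] [CommRing R] [IsDomain R] [Field K]
    [Algebra R K] [IsFractionRing R K] [Algebra E R] [Algebra E K] [IsScalarTower E R K]
    [Algebra.IsAlgebraic E K] (r : R) (hr : r ≠ 0) : ∃ e : E, e ≠ 0 ∧ r ∣ algebraMap E R e := by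
  have h : IsAlgebraic E r :=
    (isAlgebraic_algebraMap_iff (IsFractionRing.injective R K)).mp
      (Algebra.IsAlgebraic.isAlgebraic _)
  obtain ⟨e, he, h⟩ := h.exists_nonzero_dvd (mem_nonZeroDivisors_of_ne_zero hr)
  exact ⟨e, he, h⟩

theorem jz_number {R K A : Type*} [CommRing R] [IsDedekindDomain R] [Field K] [Algebra R K]
    [IsFractionRing R K] [Ring A] [Algebra K A] [FiniteDimensional K A]
    [Algebra R A] [IsScalarTower R K A] [IsSemisimpleRing A] [NumberField K]
    (Λ : Subalgebra R A) (hΛ : Submodule.span K (Λ : Set A) = ⊤) :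
    Finite (Quot (IdealIso (R := R) (K := K) (A := A) Λ)) := by
  letI : Algebra ℚ A := Algebra.compHom A (algebraMap ℚ K)
  have : IsScalarTower ℚ K A := IsScalarTower.of_algebraMap_eq fun _ => rfl
  have : Module.Finite ℚ A := Module.Finite.trans K A
  have : IsScalarTower ℤ K A := inferInstance
  have : Algebra.IsAlgebraic ℤ ℚ := IsLocalization.isAlgebraic ℚ (nonZeroDivisors ℤ)
  have : Algebra.IsAlgebraic ℤ K := Algebra.IsAlgebraic.trans ℤ ℚ K
  exact jz_bridge AbsoluteValue.absIsAdmissible (FaithfulSMul.algebraMap_injective ℤ K)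
    (jz_dvd (K := K)) (jz_lattice ℤ ℚ) Λ hΛ

theorem jz_function {R K A : Type*} [CommRing R] [IsDedekindDomain R] [Field K] [Algebra R K]
    [IsFractionRing R K] [Ring A] [Algebra K A] [FiniteDimensional K A]
    [Algebra R A] [IsScalarTower R K A] [IsSemisimpleRing A] (p : ℕ) (t : K) [Fact p.Prime]
    [CharP K p] (ht : Infinite (Subfield.closure ({t} : Set K)))
    [Module.Finite (Subfield.closure ({t} : Set K)) K]
    (Λ : Subalgebra R A) (hΛ : Submodule.span K (Λ : Set A) = ⊤) :
    Finite (Quot (IdealIso (R := R) (K := K) (A := A) Λ)) := by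
  have : CharP R p := (RingHom.charP_iff (algebraMap R K) (IsFractionRing.injective R K) p).mpr
    inferInstance
  letI : Algebra (ZMod p) R := ZMod.algebra R p
  letI : Algebra (ZMod p) K := ZMod.algebra K p
  have : IsScalarTower (ZMod p) R K := IsScalarTower.of_algebraMap_eq'
    (Subsingleton.elim _ _)
  obtain ⟨t', ht'⟩ := jz_transc (R := R) (k := ZMod p) t ht
  letI : Algebra (Polynomial (ZMod p)) R := (Polynomial.aeval (R := ZMod p) t').toRingHom.toAlgebra
  letI : Algebra (Polynomial (ZMod p)) K :=
    (Polynomial.aeval (R := ZMod p) (algebraMap R K t')).toRingHom.toAlgebra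
  have : IsScalarTower (Polynomial (ZMod p)) R K := IsScalarTower.of_algebraMap_eq fun x =>
    Polynomial.aeval_algebraMap_apply K t' x
  have hinj : Function.Injective (algebraMap (Polynomial (ZMod p)) K) :=
    transcendental_iff_injective.mp ht'
  have hexch := jz_exch t _ ht'
  have halg : Algebra.IsAlgebraic (Polynomial (ZMod p)) K := by
    letI : Algebra (Polynomial (ZMod p)) (Algebra.adjoin (ZMod p) {algebraMap R K t'}) :=
      (Polynomial.aeval (R := ZMod p) (⟨algebraMap R K t', Algebra.self_mem_adjoin_singleton _ _⟩ :
        Algebra.adjoin (ZMod p) {algebraMap R K t'})).toRingHom.toAlgebra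
    have : IsScalarTower (Polynomial (ZMod p)) (Algebra.adjoin (ZMod p) {algebraMap R K t'}) K :=
      IsScalarTower.of_algebraMap_eq fun x => Polynomial.aeval_algebraMap_apply K
        (⟨algebraMap R K t', Algebra.self_mem_adjoin_singleton _ _⟩ :
          Algebra.adjoin (ZMod p) {algebraMap R K t'}) x
    have : Algebra.IsAlgebraic (Polynomial (ZMod p))
        (Algebra.adjoin (ZMod p) {algebraMap R K t'}) := by
      constructor
      rintro ⟨x, hx⟩
      rw [Algebra.adjoin_singleton_eq_range_aeval] at hx
      obtain ⟨q, hq⟩ := hx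
      have : (⟨x, by rw [Algebra.adjoin_singleton_eq_range_aeval]; exact ⟨q, hq⟩⟩ :
          Algebra.adjoin (ZMod p) {algebraMap R K t'}) = algebraMap (Polynomial (ZMod p)) _ q := by
        apply Subtype.ext
        refine Eq.trans (show x = _ from hq.symm) ?_
        exact Polynomial.aeval_algebraMap_apply K
          (⟨algebraMap R K t', Algebra.self_mem_adjoin_singleton _ _⟩ :
            Algebra.adjoin (ZMod p) {algebraMap R K t'}) q
      rw [this]
      exact isAlgebraic_algebraMap q
    exact Algebra.IsAlgebraic.trans _ (Algebra.adjoin (ZMod p) {algebraMap R K t'}) _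
  have : FaithfulSMul (Polynomial (ZMod p)) K :=
    (faithfulSMul_iff_algebraMap_injective _ _).mpr hinj
  letI : Algebra (FractionRing (Polynomial (ZMod p))) K :=
    FractionRing.liftAlgebra (Polynomial (ZMod p)) K
  have : IsScalarTower (Polynomial (ZMod p)) (FractionRing (Polynomial (ZMod p))) K :=
    FractionRing.isScalarTower_liftAlgebra _ _
  have hti : IsIntegral (FractionRing (Polynomial (ZMod p))) t :=
    ((Algebra.IsAlgebraic.isAlgebraic (R := Polynomial (ZMod p)) t).extendScalars
      (IsFractionRing.injective _ _)).isIntegral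
  have := IntermediateField.adjoin.finiteDimensional hti
  have : Module.Finite (IntermediateField.adjoin (FractionRing (Polynomial (ZMod p))) {t}) K := by
    refine jz_fin_of_le (Subfield.closure ({t} : Set K)) ?_
    have : Subfield.closure ({t} : Set K) ≤
        (IntermediateField.adjoin (FractionRing (Polynomial (ZMod p))) {t}).toSubfield := by
      rw [Subfield.closure_le]
      exact IntermediateField.subset_adjoin _ {t}
    intro x hx
    exact ⟨⟨x, this hx⟩, rfl⟩
  have : Module.Finite (FractionRing (Polynomial (ZMod p))) K :=
    Module.Finite.trans (IntermediateField.adjoin (FractionRing (Polynomial (ZMod p))) {t}) K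
  letI : Algebra (FractionRing (Polynomial (ZMod p))) A :=
    Algebra.compHom A (algebraMap (FractionRing (Polynomial (ZMod p))) K)
  have : IsScalarTower (FractionRing (Polynomial (ZMod p))) K A :=
    IsScalarTower.of_algebraMap_eq fun _ => rfl
  letI : Algebra (Polynomial (ZMod p)) A :=
    Algebra.compHom A (algebraMap (Polynomial (ZMod p)) K)
  have : IsScalarTower (Polynomial (ZMod p)) K A := IsScalarTower.of_algebraMap_eq fun _ => rfl
  have : IsScalarTower (Polynomial (ZMod p)) (FractionRing (Polynomial (ZMod p))) A := by
    refine IsScalarTower.of_algebraMap_eq fun x => ?_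
    rw [IsScalarTower.algebraMap_apply _ K A,
      IsScalarTower.algebraMap_apply (FractionRing (Polynomial (ZMod p))) K A,
      ← IsScalarTower.algebraMap_apply _ (FractionRing (Polynomial (ZMod p))) K]
  have : Module.Finite (FractionRing (Polynomial (ZMod p))) A := Module.Finite.trans K A
  have := jz_polyFinite (k := ZMod p)
  exact jz_bridge Polynomial.cardPowDegreeIsAdmissible hinj
    (jz_dvd (K := K)) (jz_lattice (Polynomial (ZMod p)) (FractionRing (Polynomial (ZMod p)))) Λ hΛ

theorem jz_final {R K A : Type*} [CommRing R] [IsDedekindDomain R] [Field K] [Algebra R K]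
    [IsFractionRing R K] [Ring A] [Algebra K A] [FiniteDimensional K A]
    [Algebra R A] [IsScalarTower R K A]
    (hK : IsGlobalField K) (hA : IsSeparableAlgebra K A)
    (Λ : Subalgebra R A) (hΛ : IsROrder R K A Λ) :
    Finite (Quot (IdealIso (R := R) (K := K) (A := A) Λ)) := by
  have : IsSemisimpleRing A := jz_semisimple hA
  rcases hK with h | ⟨p, t, hp, hc, hi, hf, -⟩
  · exact jz_number Λ hΛ.2
  · have : Fact p.Prime := ⟨hp⟩
    exact jz_function p t hi Λ hΛ.2


end

noncomputable section

/-- **Finiteness of `LF₁(Λ)` (Jordan–Zassenhaus).**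
Let `K` be a global field and `R` the ring of `S`-integers of `K` for a finite set `S` of
places containing all archimedean ones (equivalently, `R` is a Dedekind domain with fraction
field `K` which is finitely generated as a ring).  Let `A` be a finite-dimensional separable
`K`-algebra and `Λ` an `R`-order in `A`.  Then the set `LF₁(Λ)` of isomorphism classes of
locally free right `Λ`-ideals in `A` is finite. -/
theorem finite_isomorphism_classes_of_locallyFreeIdeals
    {R K A : Type*} [CommRing R] [IsDedekindDomain R] [Field K] [Algebra R K]
    [IsFractionRing R K] [Ring A] [Algebra K A] [FiniteDimensional K A]
    [Algebra R A] [IsScalarTower R K A]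
    (hK : IsGlobalField K) (hR : Algebra.FiniteType ℤ R)
    (hA : IsSeparableAlgebra K A)
    (Λ : Subalgebra R A) (hΛ : IsROrder R K A Λ) :
    Finite (Quot (IdealIso (R := R) (K := K) (A := A) Λ)) := by
  exact jz_final hK hA Λ hΛ

end
end
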